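/- arXiv:2411.09511 — 4 statements merged into one kernel-verified Lean document; each statement's English description precedes it below -/
import Mathlib

section
/- For all m, n ∈ ℕ with m ≥ 1 and n ≥ 1, the integral over ℝ of the product of derivatives of Hermite functions satisfies ∫_ℝ 𝓗′_m(x)·𝓗′_n(x) dx = π·(√(mn) + √((m+1)(n+1)))·δ_{m,n} − π·√(m(n+1))·δ_{m,n+2} − π·√((m+1)n)·δ_{m,n−2}, where δ_{i,j} equals 1 if i = j and 0 otherwise. -/
open MeasureTheory Real

/-- The Hermite polynomial `H_m(x) = (−1)^m 2^{1/4−m} (m!)^{−1/2} π^{−m/2}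
    exp(2πx²) (d^m/dx^m) exp(−2πx²)`. -/
noncomputable def hermitePoly (m : ℕ) (x : ℝ) : ℝ :=
  (-1 : ℝ) ^ m * (2 : ℝ) ^ ((1 : ℝ) / 4 - (m : ℝ)) * (Nat.factorial m : ℝ) ^ (-(1 : ℝ) / 2)
    * Real.pi ^ (-(m : ℝ) / 2) * Real.exp (2 * Real.pi * x ^ 2)
    * iteratedDeriv m (fun y => Real.exp (-(2 * Real.pi * y ^ 2))) x

/-- The Hermite function `𝓗_m(x) = H_m(x) · exp(−πx²)`. -/
noncomputable def hermiteFun (m : ℕ) (x : ℝ) : ℝ :=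
  hermitePoly m x * Real.exp (-(Real.pi * x ^ 2))

/-!
Write `D_n(y) = He_n(y) exp(-y²/4)` with `He_n` the probabilists' Hermite polynomial; then
`𝓗_m(x) = 2^{1/4} (m!)^{-1/2} D_m(2√π x)`. Under the weight `exp(-y²/2)` the adjoint of `d/dy` sends
`He_n` to `He_{n+1}`, so moving derivatives across and using `(d/dy) He_m = m He_{m-1}` gives the
orthonormality of the `𝓗_m`. The same recursions give
`𝓗′_m = √π (√m 𝓗_{m-1} - √(m+1) 𝓗_{m+1})`, and the product of two such expansions integrates
to four orthonormality relations.
-/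

section Hermite

open Polynomial

theorem derivative_hermite (n : ℕ) :
    derivative (hermite n) = (n : ℤ[X]) * hermite (n - 1) := by
  induction n with
  | zero => simp
  | succ k ih =>
    have derivative_twice : derivative (derivative (hermite k)) =
        (k : ℤ[X]) * derivative (hermite (k - 1)) := by
      rw [ih, derivative_mul, derivative_natCast, zero_mul, zero_add]
    have lower_recursion : (k : ℤ[X]) * hermite k =
        (k : ℤ[X]) * (X * hermite (k - 1) - derivative (hermite (k - 1))) := by
      cases k with
      | zero => rw [Nat.cast_zero, zero_mul, zero_mul]
      | succ j => rw [Nat.add_sub_cancel, hermite_succ]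
    rw [hermite_succ, derivative_sub, derivative_mul, derivative_X, derivative_twice, ih,
      Nat.add_sub_cancel]
    push_cast
    linear_combination -lower_recursion

theorem X_mul_hermite (n : ℕ) :
    X * hermite n = hermite (n + 1) + (n : ℤ[X]) * hermite (n - 1) := by
  rw [hermite_succ, derivative_hermite, sub_add_cancel]

theorem hasDerivAt_exp_neg_sq_div (a x : ℝ) :
    HasDerivAt (fun y : ℝ ↦ exp (-(y ^ 2 / a))) (-(2 * x / a) * exp (-(x ^ 2 / a))) x := by
  convert ((hasDerivAt_pow 2 x).div_const a).fun_neg.exp using 1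
  push_cast
  ring

theorem hasDerivAt_hermite_mul_gaussian (n : ℕ) (x : ℝ) :
    HasDerivAt (fun y : ℝ ↦ aeval y (hermite n) * exp (-(y ^ 2 / 2)))
      (-(aeval x (hermite (n + 1)) * exp (-(x ^ 2 / 2)))) x := by
  refine (((hermite n).hasDerivAt_aeval x).mul (hasDerivAt_exp_neg_sq_div 2 x)).congr_deriv ?_
  rw [hermite_succ, map_sub, map_mul, aeval_X]
  ring

section Weight

variable {R : Type*} [CommRing R] [Algebra R ℝ]

theorem integrable_aeval_mul_exp_neg_mul_sq (p : R[X]) {b : ℝ} (hb : 0 < b) :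
    Integrable fun x : ℝ ↦ aeval x p * exp (-b * x ^ 2) := by
  induction p using Polynomial.induction_on' with
  | add p q hp hq =>
    simp only [map_add, add_mul]
    exact hp.add hq
  | monomial n a =>
    have hn : (-1 : ℝ) < n := neg_one_lt_zero.trans_le n.cast_nonneg
    simpa only [aeval_monomial, mul_assoc, rpow_natCast] using
      (integrable_rpow_mul_exp_neg_mul_sq hb hn).const_mul (algebraMap R ℝ a)

theorem integrable_aeval_mul_hermite_mul_gaussian (p : R[X]) (n : ℕ) :
    Integrable fun x : ℝ ↦ aeval x p * (aeval x (hermite n) * exp (-(x ^ 2 / 2))) := by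
  convert integrable_aeval_mul_exp_neg_mul_sq (p * (hermite n).map (algebraMap ℤ R))
    one_half_pos using 2 with x
  rw [map_mul, aeval_map_algebraMap, mul_assoc]
  ring_nf

theorem integral_aeval_mul_hermite_succ_mul_gaussian (p : R[X]) (n : ℕ) :
    ∫ x : ℝ, aeval x p * (aeval x (hermite (n + 1)) * exp (-(x ^ 2 / 2))) =
      ∫ x : ℝ, aeval x (derivative p) * (aeval x (hermite n) * exp (-(x ^ 2 / 2))) := by
  have by_parts := integral_mul_deriv_eq_deriv_mul_of_integrable
    (fun x _ ↦ p.hasDerivAt_aeval x) (fun x _ ↦ hasDerivAt_hermite_mul_gaussian n x)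
    (by simpa only [Pi.mul_def, mul_neg] using
      (integrable_aeval_mul_hermite_mul_gaussian p (n + 1)).fun_neg)
    (integrable_aeval_mul_hermite_mul_gaussian (derivative p) n)
    (integrable_aeval_mul_hermite_mul_gaussian p n)
  simpa only [mul_neg, integral_neg, neg_inj] using by_parts

end Weight

theorem integral_gaussian_div_two : ∫ x : ℝ, exp (-(x ^ 2 / 2)) = √(2 * π) := by
  convert integral_gaussian (1 / 2) using 3 <;> ring_nf

theorem integral_hermite_mul_hermite_mul_gaussian (m n : ℕ) :
    ∫ x : ℝ, aeval x (hermite m) * (aeval x (hermite n) * exp (-(x ^ 2 / 2))) =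
      if m = n then √(2 * π) * m.factorial else 0 := by
  induction n generalizing m with
  | zero =>
    cases m with
    | zero => simp [integral_gaussian_div_two]
    | succ m =>
      have integral_hermite_succ := integral_aeval_mul_hermite_succ_mul_gaussian (1 : ℤ[X]) m
      simpa using integral_hermite_succ
  | succ n ih =>
    rw [integral_aeval_mul_hermite_succ_mul_gaussian, derivative_hermite]
    simp only [map_mul, map_natCast, mul_assoc, integral_const_mul, ih]
    cases m with
    | zero => simp
    | succ m =>
      simp only [Nat.add_sub_cancel, Nat.add_right_cancel_iff, Nat.factorial_succ, mul_ite,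
        mul_zero]
      push_cast
      congr 1
      ring

theorem iteratedDeriv_exp_neg_mul_sq_div_two (n : ℕ) (c x : ℝ) :
    iteratedDeriv n (fun y ↦ exp (-((c * y) ^ 2 / 2))) x =
      c ^ n * ((-1) ^ n * aeval (c * x) (hermite n) * exp (-((c * x) ^ 2 / 2))) := by
  have smooth : ContDiff ℝ n fun y : ℝ ↦ exp (-(y ^ 2 / 2)) := by fun_prop
  rw [iteratedDeriv_comp_const_mul smooth c, iteratedDeriv_eq_iterate]
  exact congrArg (c ^ n * ·) (deriv_gaussian_eq_hermite_mul_gaussian n (c * x))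

/-- The parabolic cylinder function `D_n(x) = He_n(x) exp(-x²/4)` of integer order: the Hermite
function before rescaling and normalization. -/
noncomputable def parabolicCylinder (n : ℕ) (x : ℝ) : ℝ :=
  aeval x (hermite n) * exp (-(x ^ 2 / 4))

theorem hasDerivAt_parabolicCylinder (n : ℕ) (x : ℝ) :
    HasDerivAt (parabolicCylinder n)
      ((n * parabolicCylinder (n - 1) x - parabolicCylinder (n + 1) x) / 2) x := by
  have three_term : x * aeval x (hermite n) =
      aeval x (hermite (n + 1)) + n * aeval x (hermite (n - 1)) := by
    simpa using congrArg (aeval x) (X_mul_hermite n)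
  refine (((hermite n).hasDerivAt_aeval x).mul (hasDerivAt_exp_neg_sq_div 4 x)).congr_deriv ?_
  rw [derivative_hermite, map_mul, map_natCast]
  unfold parabolicCylinder
  linear_combination (-(1 / 2) * exp (-(x ^ 2 / 4))) * three_term

theorem parabolicCylinder_mul (m n : ℕ) (x : ℝ) :
    parabolicCylinder m x * parabolicCylinder n x =
      aeval x (hermite m) * (aeval x (hermite n) * exp (-(x ^ 2 / 2))) := by
  have gaussian_split : exp (-(x ^ 2 / 2)) = exp (-(x ^ 2 / 4)) * exp (-(x ^ 2 / 4)) := by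
    rw [← exp_add]
    ring_nf
  rw [parabolicCylinder, parabolicCylinder, gaussian_split]
  ring

theorem integrable_parabolicCylinder_mul (m n : ℕ) :
    Integrable fun x ↦ parabolicCylinder m x * parabolicCylinder n x := by
  simpa only [parabolicCylinder_mul] using integrable_aeval_mul_hermite_mul_gaussian (hermite m) n

theorem integral_parabolicCylinder_mul (m n : ℕ) :
    ∫ x, parabolicCylinder m x * parabolicCylinder n x =
      if m = n then √(2 * π) * m.factorial else 0 := by
  simpa only [parabolicCylinder_mul] using integral_hermite_mul_hermite_mul_gaussian m n

end Hermite

/-- The factor `2^{1/4} (m!)^{-1/2}` that normalizes `x ↦ parabolicCylinder m (2√π x)` in `L²(ℝ)`;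
the powers of `2` and `π` in `hermitePoly` cancel against the rescaling. -/
noncomputable def hermiteNorm (m : ℕ) : ℝ :=
  (2 : ℝ) ^ (1 / 4 : ℝ) / √(m.factorial : ℝ)

theorem sqrt_succ_mul_hermiteNorm_succ (m : ℕ) :
    √((m : ℝ) + 1) * hermiteNorm (m + 1) = hermiteNorm m := by
  have factorial_succ_sqrt : √((m + 1).factorial : ℝ) = √((m : ℝ) + 1) * √(m.factorial : ℝ) := by
    rw [Nat.factorial_succ, Nat.cast_mul, Nat.cast_succ, sqrt_mul (by positivity)]
  rw [hermiteNorm, hermiteNorm, factorial_succ_sqrt]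
  field_simp

theorem sqrt_mul_hermiteNorm_pred (m : ℕ) :
    √(m : ℝ) * hermiteNorm (m - 1) = m * hermiteNorm m := by
  cases m with
  | zero => simp
  | succ k =>
    rw [Nat.add_sub_cancel, ← sqrt_succ_mul_hermiteNorm_succ, Nat.cast_succ, ← mul_assoc,
      mul_self_sqrt (by positivity)]

theorem hermiteNorm_sq_mul_factorial (m : ℕ) : hermiteNorm m ^ 2 * m.factorial = √2 := by
  have two_rpow_sq : ((2 : ℝ) ^ (1 / 4 : ℝ)) ^ 2 = √2 := by
    rw [← rpow_mul_natCast zero_le_two, sqrt_eq_rpow]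
    norm_num
  have factorial_ne_zero : (m.factorial : ℝ) ≠ 0 := by positivity
  rw [hermiteNorm, div_pow, two_rpow_sq, sq_sqrt m.factorial.cast_nonneg,
    div_mul_cancel₀ _ factorial_ne_zero]

theorem hermiteNorm_eq (m : ℕ) :
    hermiteNorm m = (2 : ℝ) ^ ((1 : ℝ) / 4 - m) * (m.factorial : ℝ) ^ (-(1 : ℝ) / 2) *
      π ^ (-(m : ℝ) / 2) * (2 * √π) ^ m := by
  have two_factor : (2 : ℝ) ^ ((1 : ℝ) / 4 - m) * 2 ^ m = 2 ^ (1 / 4 : ℝ) := by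
    rw [← rpow_natCast, ← rpow_add two_pos, sub_add_cancel]
  have pi_factor : π ^ (-(m : ℝ) / 2) * √π ^ m = 1 := by
    rw [sqrt_eq_rpow, ← rpow_mul_natCast pi_nonneg, ← rpow_add pi_pos]
    ring_nf
    exact rpow_zero π
  have factorial_factor : (m.factorial : ℝ) ^ (-(1 : ℝ) / 2) = (√(m.factorial : ℝ))⁻¹ := by
    rw [neg_div, rpow_neg (Nat.cast_nonneg _), sqrt_eq_rpow]
  rw [hermiteNorm, factorial_factor, mul_pow, ← two_factor]
  linear_combination
    (-(2 : ℝ) ^ ((1 : ℝ) / 4 - m) * 2 ^ m * (√(m.factorial : ℝ))⁻¹) * pi_factor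

theorem two_mul_sqrt_pi_mul_sq (x : ℝ) : (2 * √π * x) ^ 2 = 4 * (π * x ^ 2) := by
  rw [mul_pow, mul_pow, sq_sqrt pi_nonneg]
  ring

theorem hermitePoly_eq (m : ℕ) (x : ℝ) :
    hermitePoly m x =
      hermiteNorm m * Polynomial.aeval (2 * √π * x) (Polynomial.hermite m) := by
  have gaussian_rescale (y : ℝ) : exp (-(2 * π * y ^ 2)) = exp (-((2 * √π * y) ^ 2 / 2)) := by
    rw [two_mul_sqrt_pi_mul_sq]
    ring_nf
  have weight_cancel : exp (2 * π * x ^ 2) * exp (-((2 * √π * x) ^ 2 / 2)) = 1 := by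
    rw [← gaussian_rescale, ← exp_add, add_neg_cancel, exp_zero]
  have sign_cancel : (-1 : ℝ) ^ m * (-1) ^ m = 1 := by
    rw [← mul_pow, neg_one_mul, neg_neg, one_pow]
  calc hermitePoly m x
      = hermiteNorm m * Polynomial.aeval (2 * √π * x) (Polynomial.hermite m) *
          ((-1) ^ m * (-1) ^ m) * (exp (2 * π * x ^ 2) * exp (-((2 * √π * x) ^ 2 / 2))) := by
        simp only [hermitePoly, gaussian_rescale, iteratedDeriv_exp_neg_mul_sq_div_two,
          hermiteNorm_eq]
        ring
    _ = hermiteNorm m * Polynomial.aeval (2 * √π * x) (Polynomial.hermite m) := by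
        rw [sign_cancel, weight_cancel, mul_one, mul_one]

theorem hermiteFun_eq_parabolicCylinder (m : ℕ) (x : ℝ) :
    hermiteFun m x = hermiteNorm m * parabolicCylinder m (2 * √π * x) := by
  have rescale : (2 * √π * x) ^ 2 / 4 = π * x ^ 2 := by
    rw [two_mul_sqrt_pi_mul_sq, mul_div_cancel_left₀ _ four_ne_zero]
  rw [hermiteFun, hermitePoly_eq, parabolicCylinder, rescale, mul_assoc]

-- At `m = 0` the truncated `m - 1` does no harm: its coefficient `√0` vanishes.
theorem deriv_hermiteFun (m : ℕ) (x : ℝ) :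
    deriv (hermiteFun m) x =
      √π * (√(m : ℝ) * hermiteFun (m - 1) x - √((m : ℝ) + 1) * hermiteFun (m + 1) x) := by
  have rescaled : HasDerivAt (fun y ↦ hermiteNorm m * parabolicCylinder m (2 * √π * y)) _ x :=
    ((hasDerivAt_parabolicCylinder m (2 * √π * x)).comp x
      (hasDerivAt_const_mul (2 * √π))).const_mul (hermiteNorm m)
  rw [funext (hermiteFun_eq_parabolicCylinder m), rescaled.deriv,
    hermiteFun_eq_parabolicCylinder, hermiteFun_eq_parabolicCylinder, ← mul_assoc √(m : ℝ),
    sqrt_mul_hermiteNorm_pred, ← mul_assoc √((m : ℝ) + 1), sqrt_succ_mul_hermiteNorm_succ]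
  ring

theorem integrable_hermiteFun_mul (m n : ℕ) :
    Integrable fun x ↦ hermiteFun m x * hermiteFun n x := by
  simp only [hermiteFun_eq_parabolicCylinder, mul_mul_mul_comm (hermiteNorm m)]
  exact ((integrable_parabolicCylinder_mul m n).comp_mul_left' (by positivity)).const_mul _

theorem integral_hermiteFun_mul (m n : ℕ) :
    ∫ x, hermiteFun m x * hermiteFun n x = if m = n then 1 else 0 := by
  simp only [hermiteFun_eq_parabolicCylinder, mul_mul_mul_comm (hermiteNorm m)]
  rw [integral_const_mul, Measure.integral_comp_mul_left
    (fun y ↦ parabolicCylinder m y * parabolicCylinder n y), integral_parabolicCylinder_mul]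
  split_ifs with hmn
  · subst hmn
    have jacobian : |(2 * √π)⁻¹| = (2 * √π)⁻¹ := abs_of_pos (by positivity)
    have two_sqrt : √2 * √2 = (2 : ℝ) := mul_self_sqrt zero_le_two
    calc hermiteNorm m * hermiteNorm m * (|(2 * √π)⁻¹| • (√(2 * π) * m.factorial))
        = (hermiteNorm m ^ 2 * m.factorial) * √2 * (√π * (2 * √π)⁻¹) := by
          rw [jacobian, smul_eq_mul, sqrt_mul zero_le_two]
          ring
      _ = 1 := by
          rw [hermiteNorm_sq_mul_factorial, two_sqrt]
          field_simp
  · simp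

theorem integral_hermiteFun_sub_mul_sub (a b c d : ℝ) (i j k l : ℕ) :
    ∫ x, (a * hermiteFun i x - b * hermiteFun j x) * (c * hermiteFun k x - d * hermiteFun l x) =
      a * c * (if i = k then 1 else 0) - a * d * (if i = l then 1 else 0) -
        (b * c * (if j = k then 1 else 0) - b * d * (if j = l then 1 else 0)) := by
  have integrable_term (r : ℝ) (p q : ℕ) := (integrable_hermiteFun_mul p q).const_mul r
  have integrable_row (r s : ℝ) (p q q' : ℕ) : Integrable fun x ↦
      r * (hermiteFun p x * hermiteFun q x) - s * (hermiteFun p x * hermiteFun q' x) :=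
    (integrable_term r p q).sub (integrable_term s p q')
  have expand (x : ℝ) :
      (a * hermiteFun i x - b * hermiteFun j x) * (c * hermiteFun k x - d * hermiteFun l x) =
        a * c * (hermiteFun i x * hermiteFun k x) - a * d * (hermiteFun i x * hermiteFun l x) -
          (b * c * (hermiteFun j x * hermiteFun k x) -
            b * d * (hermiteFun j x * hermiteFun l x)) := by
    ring
  simp only [expand]
  rw [integral_sub (integrable_row _ _ i k l) (integrable_row _ _ j k l),
    integral_sub (integrable_term _ i k) (integrable_term _ i l),
    integral_sub (integrable_term _ j k) (integrable_term _ j l)]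
  simp only [integral_const_mul, integral_hermiteFun_mul]

/-- For `m, n ≥ 1`:
`∫ 𝓗′_m 𝓗′_n = π(√(mn) + √((m+1)(n+1)))δ_{m,n} − π√(m(n+1))δ_{m,n+2} − π√((m+1)n)δ_{m,n−2}`. -/
theorem integral_deriv_hermiteFun_mul (m n : ℕ) (hm : 1 ≤ m) (hn : 1 ≤ n) :
    ∫ x : ℝ, deriv (hermiteFun m) x * deriv (hermiteFun n) x
      = Real.pi * (Real.sqrt ((m : ℝ) * (n : ℝ)) + Real.sqrt (((m : ℝ) + 1) * ((n : ℝ) + 1)))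
          * (if m = n then (1 : ℝ) else 0)
        - Real.pi * Real.sqrt ((m : ℝ) * ((n : ℝ) + 1)) * (if m = n + 2 then (1 : ℝ) else 0)
        - Real.pi * Real.sqrt (((m : ℝ) + 1) * (n : ℝ)) * (if n = m + 2 then (1 : ℝ) else 0) := by
  have expand (x : ℝ) : deriv (hermiteFun m) x * deriv (hermiteFun n) x =
      π * ((√m * hermiteFun (m - 1) x - √(m + 1) * hermiteFun (m + 1) x) *
        (√n * hermiteFun (n - 1) x - √(n + 1) * hermiteFun (n + 1) x)) := by
    rw [deriv_hermiteFun, deriv_hermiteFun, mul_mul_mul_comm, mul_self_sqrt pi_nonneg]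
  have pred_eq_pred : m - 1 = n - 1 ↔ m = n := by omega
  have pred_eq_succ : m - 1 = n + 1 ↔ m = n + 2 := by omega
  have succ_eq_pred : m + 1 = n - 1 ↔ n = m + 2 := by omega
  simp only [expand, integral_const_mul, integral_hermiteFun_sub_mul_sub, pred_eq_pred,
    pred_eq_succ, succ_eq_pred, Nat.add_right_cancel_iff]
  rw [sqrt_mul m.cast_nonneg, sqrt_mul m.cast_nonneg, sqrt_mul (by positivity),
    sqrt_mul (by positivity)]
  ring
end

section
/- Let (Ω, ℱ, ℙ) be a probability space, n ≥ 1, 0 ≤ t < T < ∞, and for each x ∈ ℝⁿ let X_x : Ω × [t,T] → ℝⁿ be jointly measurable with s ↦ X_x(ω,s) continuous for every ω ∈ Ω. For bounded continuous φ, c, f : ℝⁿ → ℝ define u[φ,c,f](x) := E[ φ(X_x(T)) · exp(∫_t^T c(X_x(s)) ds) ] − E[ ∫_t^T f(X_x(s)) · exp(∫_t^s c(X_x(r)) dr) ds ]. If φ_k, c_k, f_k (k ∈ ℕ) are bounded continuous functions on ℝⁿ converging uniformly on ℝⁿ to φ, c, f respectively, then sup_{x∈ℝⁿ} | u[φ_k,c_k,f_k](x)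 − u[φ,c,f](x) | → 0 as k → ∞. -/
open MeasureTheory Filter

/-- The Feynman–Kac-type solution functional
`u[φ,c,f](x) = E[φ(X_x(T)) exp(∫_t^T c(X_x(s))ds)]
  − E[∫_t^T f(X_x(s)) exp(∫_t^s c(X_x(r))dr) ds]`. -/
noncomputable def feynmanKac {n : ℕ} {Ω : Type*} [MeasurableSpace Ω] (μ : Measure Ω)
    (X : EuclideanSpace ℝ (Fin n) → Ω → ℝ → EuclideanSpace ℝ (Fin n)) (t T : ℝ)
    (φ c f : EuclideanSpace ℝ (Fin n) → ℝ) (x : EuclideanSpace ℝ (Fin n)) : ℝ :=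
  (∫ ω, φ (X x ω T) * Real.exp (∫ s in t..T, c (X x ω s)) ∂μ)
    - ∫ ω, (∫ s in t..T, f (X x ω s) * Real.exp (∫ r in t..s, c (X x ω r))) ∂μ

/-! Uniform convergence passes through each operation that builds the functional: composition with
a continuous map of a bounded limit, `∫ ω ∂μ` against a finite measure, and `∫ r in t..s` with `s`
in a compact interval. Precomposing with the paths `X x ω` makes the convergence uniform in the
parameter `x`, the sample `ω` and the time `s` at once; the continuous map `(p, a) ↦ p * exp a` then
yields the two integrands. -/

open Function Set

section BoundedIntegrand

variable {E : Type*} [NormedAddCommGroup E] {g : ℝ → E} {t T s B : ℝ}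

theorem norm_intervalIntegral_le_of_mem_uIcc [NormedSpace ℝ E] (hg : ∀ r, ‖g r‖ ≤ B)
    (hs : s ∈ uIcc t T) : ‖∫ r in t..s, g r‖ ≤ B * |T - t| :=
  (intervalIntegral.norm_integral_le_of_norm_le_const fun r _ => hg r).trans
    (mul_le_mul_of_nonneg_left (abs_sub_left_of_mem_uIcc hs) ((norm_nonneg _).trans (hg t)))

theorem intervalIntegrable_of_norm_le_const
    (hg_meas : AEStronglyMeasurable g (volume.restrict (uIoc t T)))
    (hg : ∀ r ∈ uIoc t T, ‖g r‖ ≤ B) : IntervalIntegrable g volume t T :=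
  intervalIntegrable_const.mono_fun' hg_meas (ae_restrict_of_forall_mem measurableSet_uIoc hg)

end BoundedIntegrand

section UniformConvergence

variable {κ α E F : Type*} {l : Filter κ}

theorem tendstoUniformlyOn_continuous_comp [PseudoMetricSpace E] [ProperSpace E] [UniformSpace F]
    {Φ : E → F} (hΦ : Continuous Φ) {G : κ → α → E} {g : α → E} {s : Set α}
    (hbdd : Bornology.IsBounded (g '' s)) (hG : TendstoUniformlyOn G g l s) :
    TendstoUniformlyOn (fun k => Φ ∘ G k) (Φ ∘ g) l s := by
  have hΦ_uniform : UniformContinuousOn Φ (Metric.cthickening 1 (g '' s)) :=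
    (Metric.isCompact_of_isClosed_isBounded Metric.isClosed_cthickening
      hbdd.cthickening).uniformContinuousOn_of_continuous hΦ.continuousOn
  refine hΦ_uniform.comp_tendstoUniformlyOn_eventually ?_
    (fun a ha => Metric.self_subset_cthickening _ (mem_image_of_mem g ha)) hG
  filter_upwards [Metric.tendstoUniformlyOn_iff.1 hG 1 one_pos] with k hk a ha
  exact Metric.mem_cthickening_of_dist_le _ (g a) _ _ (mem_image_of_mem g ha)
    (dist_comm (g a) (G k a) ▸ (hk a ha).le)

theorem tendstoUniformly_of_univ_prod {β : Type*} [UniformSpace F] {G : κ → α × β → F}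
    {g : α × β → F} {s : Set β} {b : β} (hb : b ∈ s) (hG : TendstoUniformlyOn G g l (univ ×ˢ s)) :
    TendstoUniformly (fun k a => G k (a, b)) (fun a => g (a, b)) l :=
  fun u hu => (hG u hu).mono fun _ hk a => hk (a, b) ⟨mem_univ a, hb⟩

variable [NormedAddCommGroup E] [NormedSpace ℝ E]

theorem tendstoUniformly_integral {Ω : Type*} [MeasurableSpace Ω] {μ : Measure Ω}
    [IsFiniteMeasure μ] {G : κ → α → Ω → E} {g : α → Ω → E}
    (hG_meas : ∀ k a, AEStronglyMeasurable (G k a) μ) (hg : ∀ a, Integrable (g a) μ)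
    (hG : TendstoUniformly (fun k => uncurry (G k)) (uncurry g) l) :
    TendstoUniformly (fun k a => ∫ ω, G k a ω ∂μ) (fun a => ∫ ω, g a ω ∂μ) l := by
  rw [Metric.tendstoUniformly_iff] at hG ⊢
  intro ε hε
  obtain ⟨δ, hδ, hδε⟩ := exists_pos_mul_lt hε (μ.real univ)
  filter_upwards [hG δ hδ] with k hk a
  have hbound : ∀ ω, ‖(g a - G k a) ω‖ ≤ δ := fun ω => by
    simpa only [dist_eq_norm] using! (hk (a, ω)).le
  have hdiff : Integrable (g a - G k a) μ :=
    .of_bound ((hg a).aestronglyMeasurable.sub (hG_meas k a)) δ (.of_forall hbound)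
  have hGk : Integrable (G k a) μ := by simpa only [sub_sub_cancel] using (hg a).sub hdiff
  calc dist (∫ ω, g a ω ∂μ) (∫ ω, G k a ω ∂μ)
      = ‖∫ ω, (g a - G k a) ω ∂μ‖ := by rw [dist_eq_norm, integral_sub' (hg a) hGk]
    _ ≤ δ * μ.real univ := norm_integral_le_of_norm_le_const (.of_forall hbound)
    _ < ε := by rwa [mul_comm]

theorem tendstoUniformlyOn_intervalIntegral {t T : ℝ} {G : κ → α → ℝ → E} {g : α → ℝ → E}
    (hG_meas : ∀ k a, AEStronglyMeasurable (G k a) (volume.restrict (uIoc t T)))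
    (hg : ∀ a, IntervalIntegrable (g a) volume t T)
    (hG : TendstoUniformlyOn (fun k => uncurry (G k)) (uncurry g) l (univ ×ˢ uIcc t T)) :
    TendstoUniformlyOn (fun k p => ∫ r in t..p.2, G k p.1 r) (fun p => ∫ r in t..p.2, g p.1 r) l
      (univ ×ˢ uIcc t T) := by
  rw [Metric.tendstoUniformlyOn_iff] at hG ⊢
  intro ε hε
  obtain ⟨δ, hδ, hδε⟩ := exists_pos_mul_lt hε |T - t|
  filter_upwards [hG δ hδ] with k hk
  rintro ⟨a, s⟩ ⟨-, hs⟩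
  have hbound : ∀ r ∈ uIoc t T, ‖(g a - G k a) r‖ ≤ δ := fun r hr => by
    simpa only [dist_eq_norm] using! (hk (a, r) ⟨mem_univ a, uIoc_subset_uIcc hr⟩).le
  have hdiff : IntervalIntegrable (g a - G k a) volume t T :=
    intervalIntegrable_of_norm_le_const
      ((hg a).def'.aestronglyMeasurable.sub (hG_meas k a)) hbound
  have hGk : IntervalIntegrable (G k a) volume t T := by
    simpa only [Pi.sub_apply, sub_sub_cancel] using (hg a).sub hdiff
  have hts : uIcc t s ⊆ uIcc t T := uIcc_subset_uIcc_left hs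
  calc dist (∫ r in t..s, g a r) (∫ r in t..s, G k a r)
      = ‖∫ r in t..s, (g a - G k a) r‖ := by
        rw [dist_eq_norm, ← intervalIntegral.integral_sub ((hg a).mono_set hts) (hGk.mono_set hts)]
        rfl
    _ ≤ δ * |s - t| := intervalIntegral.norm_integral_le_of_norm_le_const fun r hr =>
        hbound r (uIoc_subset_uIoc_of_uIcc_subset_uIcc hts hr)
    _ ≤ δ * |T - t| := by gcongr ?_ * ?_; exact abs_sub_left_of_mem_uIcc hs
    _ < ε := by rwa [mul_comm]

end UniformConvergence

section ParametricIntegral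

variable {Ω E : Type*} [MeasurableSpace Ω] [NormedAddCommGroup E] [NormedSpace ℝ E]
  {ν : Measure ℝ} [SFinite ν] {a b : Ω → ℝ} {g : Ω → ℝ → E}

theorem stronglyMeasurable_setIntegral_Ioc (ha : Measurable a) (hb : Measurable b)
    (hg : StronglyMeasurable (uncurry g)) :
    StronglyMeasurable fun ω => ∫ r in Ioc (a ω) (b ω), g ω r ∂ν := by
  have hIoc : MeasurableSet {p : Ω × ℝ | p.2 ∈ Ioc (a p.1) (b p.1)} :=
    (measurableSet_lt (ha.comp measurable_fst) measurable_snd).inter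
      (measurableSet_le measurable_snd (hb.comp measurable_fst))
  simp_rw [← integral_indicator measurableSet_Ioc]
  exact (hg.indicator hIoc).integral_prod_right'

theorem stronglyMeasurable_intervalIntegral (ha : Measurable a) (hb : Measurable b)
    (hg : StronglyMeasurable (uncurry g)) :
    StronglyMeasurable fun ω => ∫ r in a ω..b ω, g ω r ∂ν :=
  (stronglyMeasurable_setIntegral_Ioc ha hb hg).sub (stronglyMeasurable_setIntegral_Ioc hb ha hg)

end ParametricIntegral

/-- The value at time `s` of a path `g`, weighted by the exponential of the potential `c`
accumulated from time `t` to time `s`. Both integrands of the Feynman–Kac functional are of this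
form. -/
noncomputable def expWeighted (t : ℝ) (c g : ℝ → ℝ) (s : ℝ) : ℝ :=
  g s * Real.exp (∫ r in t..s, c r)

section ExpWeighted

variable {κ α Ω : Type*} [MeasurableSpace Ω] {l : Filter κ} {t T A B : ℝ}

theorem norm_expWeighted_le {c g : ℝ → ℝ} (hc : ∀ r, ‖c r‖ ≤ B) (hg : ∀ r, ‖g r‖ ≤ A) {s : ℝ}
    (hs : s ∈ uIcc t T) : ‖expWeighted t c g s‖ ≤ A * Real.exp (B * |T - t|) := by
  have hexp : Real.exp (∫ r in t..s, c r) ≤ Real.exp (B * |T - t|) :=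
    Real.exp_le_exp.2 ((le_abs_self _).trans (norm_intervalIntegral_le_of_mem_uIcc hc hs))
  rw [expWeighted, norm_mul, Real.norm_of_nonneg (Real.exp_pos _).le]
  exact mul_le_mul (hg s) hexp (Real.exp_pos _).le ((norm_nonneg _).trans (hg s))

theorem measurable_expWeighted {c g : Ω → ℝ → ℝ} (hc : Measurable (uncurry c))
    (hg : Measurable (uncurry g)) : Measurable (uncurry fun ω => expWeighted t (c ω) (g ω)) := by
  have hc_comp : Measurable (uncurry fun (p : Ω × ℝ) r => c p.1 r) :=
    hc.comp (measurable_fst.fst.prodMk measurable_snd)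
  exact hg.mul (stronglyMeasurable_intervalIntegral measurable_const measurable_snd
    hc_comp.stronglyMeasurable).measurable.exp

theorem tendstoUniformlyOn_expWeighted {C G : κ → α → ℝ → ℝ} {c g : α → ℝ → ℝ}
    (hC_meas : ∀ k a, Measurable (C k a)) (hc_meas : ∀ a, Measurable (c a))
    (hc : ∀ a r, ‖c a r‖ ≤ B) (hg : ∀ a r, ‖g a r‖ ≤ A)
    (hC : TendstoUniformlyOn (fun k => uncurry (C k)) (uncurry c) l (univ ×ˢ uIcc t T))
    (hG : TendstoUniformlyOn (fun k => uncurry (G k)) (uncurry g) l (univ ×ˢ uIcc t T)) :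
    TendstoUniformlyOn (fun k => uncurry fun a => expWeighted t (C k a) (G k a))
      (uncurry fun a => expWeighted t (c a) (g a)) l (univ ×ˢ uIcc t T) := by
  have hexponent : TendstoUniformlyOn (fun k p => ∫ r in t..p.2, C k p.1 r)
      (fun p => ∫ r in t..p.2, c p.1 r) l (univ ×ˢ uIcc t T) :=
    tendstoUniformlyOn_intervalIntegral (fun k a => (hC_meas k a).aestronglyMeasurable)
      (fun a => intervalIntegrable_of_norm_le_const (hc_meas a).aestronglyMeasurable
        fun r _ => hc a r) hC
  have hbdd : Bornology.IsBounded
      ((fun p => (uncurry g p, ∫ r in t..p.2, c p.1 r)) '' (univ ×ˢ uIcc t T)) := by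
    refine isBounded_iff_forall_norm_le.2 ⟨max A (B * |T - t|), ?_⟩
    rintro _ ⟨⟨a, s⟩, ⟨-, hs⟩, rfl⟩
    exact max_le_max (hg a s) (norm_intervalIntegral_le_of_mem_uIcc (hc a) hs)
  have hpair : TendstoUniformlyOn (fun k p => (uncurry (G k) p, ∫ r in t..p.2, C k p.1 r))
      (fun p => (uncurry g p, ∫ r in t..p.2, c p.1 r)) l (univ ×ˢ uIcc t T) :=
    fun u hu => (hG.prodMk hexponent u hu).diag_of_prod
  have hΦ : Continuous fun z : ℝ × ℝ => z.1 * Real.exp z.2 := by fun_prop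
  exact tendstoUniformlyOn_continuous_comp hΦ hbdd hpair

end ExpWeighted

/-- The Feynman–Kac functional for a family of `E`-valued paths `X i` indexed by an arbitrary type,
of which `feynmanKac` is the case where both the index and the state space are Euclidean. -/
noncomputable def feynmanKacFunctional {ι Ω E : Type*} [MeasurableSpace Ω] (μ : Measure Ω)
    (X : ι → Ω → ℝ → E) (t T : ℝ) (φ c f : E → ℝ) (i : ι) : ℝ :=
  (∫ ω, expWeighted t (c ∘ X i ω) (φ ∘ X i ω) T ∂μ)
    - ∫ ω, (∫ s in t..T, expWeighted t (c ∘ X i ω) (f ∘ X i ω) s) ∂μ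

section FeynmanKac

variable {κ ι Ω E : Type*} {l : Filter κ} [MeasurableSpace Ω] [MeasurableSpace E] {μ : Measure Ω}
  [IsFiniteMeasure μ] {X : ι → Ω → ℝ → E} {t T A B : ℝ} {φ c f g : E → ℝ}
  {φs cs fs gs : κ → E → ℝ}

theorem measurable_expWeighted_path {Y : Ω → ℝ → E} (hY : Measurable (uncurry Y))
    (hc : Measurable c) (hg : Measurable g) :
    Measurable (uncurry fun ω => expWeighted t (c ∘ Y ω) (g ∘ Y ω)) :=
  measurable_expWeighted (hc.comp hY) (hg.comp hY)

theorem tendstoUniformlyOn_expWeighted_path (hX : ∀ i, Measurable (uncurry (X i)))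
    (hc : Measurable c) (hc_bdd : ∀ z, ‖c z‖ ≤ B) (hg_bdd : ∀ z, ‖g z‖ ≤ A)
    (hcs : ∀ k, Measurable (cs k)) (hc_lim : TendstoUniformly cs c l)
    (hg_lim : TendstoUniformly gs g l) :
    TendstoUniformlyOn
      (fun k => uncurry fun p : ι × Ω => expWeighted t (cs k ∘ X p.1 p.2) (gs k ∘ X p.1 p.2))
      (uncurry fun p : ι × Ω => expWeighted t (c ∘ X p.1 p.2) (g ∘ X p.1 p.2)) l
      (univ ×ˢ uIcc t T) := by
  have hX_path : ∀ p : ι × Ω, Measurable (X p.1 p.2) := fun p => (hX p.1).of_uncurry_left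
  exact tendstoUniformlyOn_expWeighted (fun k p => (hcs k).comp (hX_path p))
    (fun p => hc.comp (hX_path p)) (fun _ _ => hc_bdd _) (fun _ _ => hg_bdd _)
    (hc_lim.comp fun q : (ι × Ω) × ℝ => X q.1.1 q.1.2 q.2).tendstoUniformlyOn
    (hg_lim.comp fun q : (ι × Ω) × ℝ => X q.1.1 q.1.2 q.2).tendstoUniformlyOn

theorem tendstoUniformly_integral_expWeighted (hX : ∀ i, Measurable (uncurry (X i)))
    (hc : Measurable c) (hc_bdd : ∀ z, ‖c z‖ ≤ B) (hg : Measurable g) (hg_bdd : ∀ z, ‖g z‖ ≤ A)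
    (hcs : ∀ k, Measurable (cs k)) (hgs : ∀ k, Measurable (gs k))
    (hc_lim : TendstoUniformly cs c l) (hg_lim : TendstoUniformly gs g l) :
    TendstoUniformly (fun k i => ∫ ω, expWeighted t (cs k ∘ X i ω) (gs k ∘ X i ω) T ∂μ)
      (fun i => ∫ ω, expWeighted t (c ∘ X i ω) (g ∘ X i ω) T ∂μ) l := by
  have hmeas {c g : E → ℝ} (hc : Measurable c) (hg : Measurable g) (i : ι) :
      AEStronglyMeasurable (fun ω => expWeighted t (c ∘ X i ω) (g ∘ X i ω) T) μ :=
    (measurable_expWeighted_path (hX i) hc hg).of_uncurry_right.aestronglyMeasurable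
  have hbound (i : ι) (ω : Ω) :
      ‖expWeighted t (c ∘ X i ω) (g ∘ X i ω) T‖ ≤ A * Real.exp (B * |T - t|) :=
    norm_expWeighted_le (fun _ => hc_bdd _) (fun _ => hg_bdd _) right_mem_uIcc
  exact tendstoUniformly_integral (fun k => hmeas (hcs k) (hgs k))
    (fun i => .of_bound (hmeas hc hg i) _ (.of_forall (hbound i)))
    (tendstoUniformly_of_univ_prod right_mem_uIcc
      (tendstoUniformlyOn_expWeighted_path hX hc hc_bdd hg_bdd hcs hc_lim hg_lim))

theorem tendstoUniformly_integral_intervalIntegral_expWeighted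
    (hX : ∀ i, Measurable (uncurry (X i)))
    (hc : Measurable c) (hc_bdd : ∀ z, ‖c z‖ ≤ B) (hg : Measurable g) (hg_bdd : ∀ z, ‖g z‖ ≤ A)
    (hcs : ∀ k, Measurable (cs k)) (hgs : ∀ k, Measurable (gs k))
    (hc_lim : TendstoUniformly cs c l) (hg_lim : TendstoUniformly gs g l) :
    TendstoUniformly
      (fun k i => ∫ ω, (∫ s in t..T, expWeighted t (cs k ∘ X i ω) (gs k ∘ X i ω) s) ∂μ)
      (fun i => ∫ ω, (∫ s in t..T, expWeighted t (c ∘ X i ω) (g ∘ X i ω) s) ∂μ) l := by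
  have hmeas_time {c g : E → ℝ} (hc : Measurable c) (hg : Measurable g) (p : ι × Ω) :
      AEStronglyMeasurable (expWeighted t (c ∘ X p.1 p.2) (g ∘ X p.1 p.2))
        (volume.restrict (uIoc t T)) :=
    (measurable_expWeighted_path (hX p.1) hc hg).of_uncurry_left.aestronglyMeasurable
  have hmeas {c g : E → ℝ} (hc : Measurable c) (hg : Measurable g) (i : ι) :
      AEStronglyMeasurable (fun ω => ∫ s in t..T, expWeighted t (c ∘ X i ω) (g ∘ X i ω) s) μ :=
    (stronglyMeasurable_intervalIntegral measurable_const measurable_const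
      (measurable_expWeighted_path (hX i) hc hg).stronglyMeasurable).aestronglyMeasurable
  have hbound (i : ι) (ω : Ω) (s : ℝ) (hs : s ∈ uIoc t T) :
      ‖expWeighted t (c ∘ X i ω) (g ∘ X i ω) s‖ ≤ A * Real.exp (B * |T - t|) :=
    norm_expWeighted_le (fun _ => hc_bdd _) (fun _ => hg_bdd _) (uIoc_subset_uIcc hs)
  have hlim := tendstoUniformlyOn_intervalIntegral (fun k => hmeas_time (hcs k) (hgs k))
    (fun p => intervalIntegrable_of_norm_le_const (hmeas_time hc hg p) (hbound p.1 p.2))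
    (tendstoUniformlyOn_expWeighted_path hX hc hc_bdd hg_bdd hcs hc_lim hg_lim)
  exact tendstoUniformly_integral (fun k => hmeas (hcs k) (hgs k))
    (fun i => .of_bound (hmeas hc hg i) _ (.of_forall fun ω =>
      intervalIntegral.norm_integral_le_of_norm_le_const (hbound i ω)))
    (tendstoUniformly_of_univ_prod right_mem_uIcc hlim)

theorem feynmanKac_tendstoUniformly_general (hX : ∀ i, Measurable (uncurry (X i)))
    (hφ : Measurable φ) (hφ_bdd : ∃ M, ∀ z, ‖φ z‖ ≤ M)
    (hc : Measurable c) (hc_bdd : ∃ M, ∀ z, ‖c z‖ ≤ M)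
    (hf : Measurable f) (hf_bdd : ∃ M, ∀ z, ‖f z‖ ≤ M)
    (hφs : ∀ k, Measurable (φs k)) (hcs : ∀ k, Measurable (cs k)) (hfs : ∀ k, Measurable (fs k))
    (hφ_lim : TendstoUniformly φs φ l) (hc_lim : TendstoUniformly cs c l)
    (hf_lim : TendstoUniformly fs f l) :
    TendstoUniformly (fun k => feynmanKacFunctional μ X t T (φs k) (cs k) (fs k))
      (feynmanKacFunctional μ X t T φ c f) l := by
  obtain ⟨_, hφ_bdd⟩ := hφ_bdd
  obtain ⟨_, hc_bdd⟩ := hc_bdd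
  obtain ⟨_, hf_bdd⟩ := hf_bdd
  exact
    (tendstoUniformly_integral_expWeighted hX hc hc_bdd hφ hφ_bdd hcs hφs hc_lim hφ_lim).sub
    (tendstoUniformly_integral_intervalIntegral_expWeighted hX hc hc_bdd hf hf_bdd hcs hfs
      hc_lim hf_lim)

end FeynmanKac

/-- If `φ_k → φ`, `c_k → c`, `f_k → f` uniformly on `ℝⁿ` (all bounded continuous), then
`sup_{x∈ℝⁿ} |u[φ_k,c_k,f_k](x) − u[φ,c,f](x)| → 0`. -/
theorem feynmanKac_tendstoUniformly
    (n : ℕ) (hn : 1 ≤ n) (Ω : Type*) [MeasurableSpace Ω] (μ : Measure Ω)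
    [IsProbabilityMeasure μ] (t T : ℝ) (ht : 0 ≤ t) (htT : t < T)
    (X : EuclideanSpace ℝ (Fin n) → Ω → ℝ → EuclideanSpace ℝ (Fin n))
    (hXmeas : ∀ x, Measurable (Function.uncurry (X x)))
    (hXcont : ∀ x ω, ContinuousOn (X x ω) (Set.Icc t T))
    (φ c f : EuclideanSpace ℝ (Fin n) → ℝ)
    (φs cs fs : ℕ → EuclideanSpace ℝ (Fin n) → ℝ)
    (hφ : Continuous φ) (hφb : ∃ M : ℝ, ∀ z, |φ z| ≤ M)
    (hc : Continuous c) (hcb : ∃ M : ℝ, ∀ z, |c z| ≤ M)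
    (hf : Continuous f) (hfb : ∃ M : ℝ, ∀ z, |f z| ≤ M)
    (hφs : ∀ k, Continuous (φs k)) (hφsb : ∀ k, ∃ M : ℝ, ∀ z, |φs k z| ≤ M)
    (hcs : ∀ k, Continuous (cs k)) (hcsb : ∀ k, ∃ M : ℝ, ∀ z, |cs k z| ≤ M)
    (hfs : ∀ k, Continuous (fs k)) (hfsb : ∀ k, ∃ M : ℝ, ∀ z, |fs k z| ≤ M)
    (hφconv : TendstoUniformly φs φ atTop)
    (hcconv : TendstoUniformly cs c atTop)
    (hfconv : TendstoUniformly fs f atTop) :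
    TendstoUniformly (fun k x => feynmanKac μ X t T (φs k) (cs k) (fs k) x)
      (feynmanKac μ X t T φ c f) atTop := by
  exact feynmanKac_tendstoUniformly_general hXmeas hφ.measurable hφb hc.measurable hcb
    hf.measurable hfb (fun k => (hφs k).measurable) (fun k => (hcs k).measurable)
    (fun k => (hfs k).measurable) hφconv hcconv hfconv
end

section
/- Let (Ω, ℱ, ℙ) be a probability space, n ≥ 1, 0 ≤ t < T < ∞, 0 < λ ≤ 1, and for each x ∈ ℝⁿ let X_x : Ω × [t,T] → ℝⁿ be jointly measurable with continuous sample paths. Let φ, c, f : ℝⁿ → ℝ be bounded and λ-Hölder continuous, with ‖φ‖_∞ ≤ M_φ, ‖c‖_∞ ≤ M_c, ‖f‖_∞ ≤ M_f and Hölder constants K_φ, K_c, K_f (i.e., |φ(z)−φ(w)| ≤ K_φ|z−w|^λ for all z,w, and similarly for c and f). Fix R > 0 and C_R > 0 and assume that for all x, y with |x| ≤ R and |y| ≤ R, the random variable ω ↦ sup_{t≤s≤T} |X_x(ω,s) − X_y(ω,s)|² is integrable with E[ sup_{t≤s≤T} |X_x(s) − X_y(s)|² ] ≤ C_R |x−y|².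 Define u(x) := E[ φ(X_x(T)) · exp(∫_t^T c(X_x(s)) ds) ] − E[ ∫_t^T f(X_x(s)) · exp(∫_t^s c(X_x(r)) dr) ds ]. Then for all x, y with |x| ≤ R, |y| ≤ R: |u(x) − u(y)| ≤ Γ·|x−y|^λ, where Γ = e^{(T−t)M_c} · C_R^{λ/2} · ( K_φ + M_φ·K_c·(T−t) + K_f·(T−t) + M_f·K_c·(T−t)²/2 ). -/
open MeasureTheory Filter

/-!
On a single path, the exponential weights `exp (∫ c)` are bounded by `exp ((T - t) * Mc)`, and `exp`
is Lipschitz with that constant below the bound, so replacing the path by one at uniform distance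
`δ` changes the Feynman–Kac integrand by at most `Γ * δ ^ λ`. Taking expectations with
`δ ^ 2 = sup ‖X_x - X_y‖ ^ 2`, Jensen's inequality for the concave power `λ / 2` turns the
second-moment stability estimate into the Hölder bound.
-/

open Set
open scoped NNReal

section Prerequisites

lemma abs_exp_sub_exp_le {a b B : ℝ} (ha : a ≤ B) (hb : b ≤ B) :
    |Real.exp a - Real.exp b| ≤ Real.exp B * |a - b| := by
  refine (convex_Iic B).norm_image_sub_le_of_norm_deriv_le
    (fun _ _ ↦ Real.differentiableAt_exp) (fun z hz ↦ ?_) hb ha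
  simpa using hz

lemma intervalIntegral_le_mul_of_le {a : ℝ → ℝ} {t s M : ℝ} (hts : t ≤ s)
    (ha : IntervalIntegrable a volume t s) (haM : ∀ r ∈ Icc t s, a r ≤ M) :
    ∫ r in t..s, a r ≤ (s - t) * M := by
  simpa using intervalIntegral.integral_mono_on hts ha intervalIntegrable_const haM

lemma integral_add_mul_sub (t T P Q : ℝ) :
    ∫ s in t..T, (P + Q * (s - t)) = P * (T - t) + Q * (T - t) ^ 2 / 2 := by
  rw [intervalIntegral.integral_comp_sub_right (fun s ↦ P + Q * s) t,
    intervalIntegral.integral_add intervalIntegrable_const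
      (Continuous.intervalIntegrable (by fun_prop) _ _),
    intervalIntegral.integral_const, intervalIntegral.integral_const_mul, integral_id, smul_eq_mul]
  ring

lemma nonneg_of_abs_sub_le_mul_norm_rpow {E : Type*} [NormedAddCommGroup E] [Nontrivial E]
    {g : E → ℝ} {K lam : ℝ} (hg : ∀ z w, |g z - g w| ≤ K * ‖z - w‖ ^ lam) : 0 ≤ K := by
  obtain ⟨z, hz⟩ := exists_ne (0 : E)
  have hdist : 0 < ‖z - 0‖ ^ lam := Real.rpow_pos_of_pos (by simpa using hz) lam
  exact nonneg_of_mul_nonneg_left ((abs_nonneg _).trans (hg z 0)) hdist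

lemma holderWith_of_abs_sub_le_mul_norm_rpow {E : Type*} [SeminormedAddCommGroup E]
    {g : E → ℝ} {K lam : ℝ≥0} (hg : ∀ z w, |g z - g w| ≤ K * ‖z - w‖ ^ (lam : ℝ)) :
    HolderWith K lam g := by
  intro z w
  rw [edist_nndist, edist_nndist, ← ENNReal.coe_rpow_of_nonneg _ lam.coe_nonneg,
    ← ENNReal.coe_mul, ENNReal.coe_le_coe, ← NNReal.coe_le_coe]
  simpa [Real.dist_eq, dist_eq_norm] using hg z w

lemma sq_rpow_half {d : ℝ} (hd : 0 ≤ d) (p : ℝ) : (d ^ 2) ^ (p / 2) = d ^ p := by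
  rw [← Real.rpow_natCast, ← Real.rpow_mul hd]
  congr 1
  push_cast
  ring

variable {Ω : Type*} [MeasurableSpace Ω] {μ : Measure Ω}

lemma integrable_rpow_of_le_one [IsFiniteMeasure μ] {Z : Ω → ℝ} {p : ℝ} (hZ : Integrable Z μ)
    (hp0 : 0 ≤ p) (hp1 : p ≤ 1) : Integrable (fun ω ↦ Z ω ^ p) μ := by
  refine ((integrable_const (1 : ℝ)).add hZ.abs).mono'
    (hZ.aemeasurable.pow_const p).aestronglyMeasurable (.of_forall fun ω ↦ ?_)
  have hle : 1 ≤ 1 + |Z ω| := le_add_of_nonneg_right (abs_nonneg _)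
  calc ‖Z ω ^ p‖ ≤ |Z ω| ^ p := Real.abs_rpow_le_abs_rpow _ _
    _ ≤ (1 + |Z ω|) ^ p := by gcongr; linarith
    _ ≤ 1 + |Z ω| := Real.rpow_le_self_of_one_le hle hp1

lemma integral_rpow_le_rpow_integral [IsProbabilityMeasure μ] {Z : Ω → ℝ} {p : ℝ}
    (hZ : Integrable Z μ) (hZ0 : ∀ ω, 0 ≤ Z ω) (hp0 : 0 ≤ p) (hp1 : p ≤ 1) :
    ∫ ω, Z ω ^ p ∂μ ≤ (∫ ω, Z ω ∂μ) ^ p :=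
  (Real.concaveOn_rpow hp0 hp1).le_map_integral (Real.continuous_rpow_const hp0).continuousOn
    isClosed_Ici (.of_forall hZ0) hZ (integrable_rpow_of_le_one hZ hp0 hp1)

lemma measurable_uncurry_intervalIntegral {a : Ω → ℝ → ℝ} (ha : Measurable (Function.uncurry a))
    (t : ℝ) : Measurable (Function.uncurry fun ω s ↦ ∫ r in t..s, a ω r) := by
  have hsection {U : Set (ℝ × ℝ)} (hU : MeasurableSet U) :
      Measurable fun z : Ω × ℝ ↦ ∫ r in Prod.mk z.2 ⁻¹' U, a z.1 r := by
    simp_rw [← integral_indicator (measurable_prodMk_left hU)]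
    have hind : Measurable (indicator {w : (Ω × ℝ) × ℝ | (w.1.2, w.2) ∈ U}
        fun w ↦ a w.1.1 w.2) :=
      (ha.comp (by fun_prop : Measurable fun w : (Ω × ℝ) × ℝ ↦ (w.1.1, w.2))).indicator
        (hU.preimage (by fun_prop))
    exact hind.stronglyMeasurable.integral_prod_right'.measurable
  exact (hsection (U := {w | t < w.2 ∧ w.2 ≤ w.1}) (by measurability)).sub
    (hsection (U := {w | w.1 < w.2 ∧ w.2 ≤ t}) (by measurability))

lemma dist_sq_le_iSup_dist_sq {E : Type*} [PseudoMetricSpace E] {p q : ℝ → E} {t T s : ℝ}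
    (hp : ContinuousOn p (Icc t T)) (hq : ContinuousOn q (Icc t T)) (hs : s ∈ Icc t T) :
    dist (p s) (q s) ^ 2 ≤ ⨆ r : Icc t T, dist (p r) (q r) ^ 2 := by
  have hbdd : BddAbove (range fun r : Icc t T ↦ dist (p r) (q r) ^ 2) := by
    rw [← image_eq_range (fun r ↦ dist (p r) (q r) ^ 2)]
    exact isCompact_Icc.bddAbove_image ((continuous_dist.comp_continuousOn (hp.prodMk hq)).pow 2)
  exact le_ciSup hbdd ⟨s, hs⟩

end Prerequisites

/-- The multiplicative Feynman–Kac weight `exp (∫ r in t..s, a r)` accumulated between the times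
`t` and `s` by the potential `a`, read along a path. -/
noncomputable def feynmanKacWeight (a : ℝ → ℝ) (t s : ℝ) : ℝ :=
  Real.exp (∫ r in t..s, a r)

section Weight

variable {a b g h : ℝ → ℝ} {t T s M N L P : ℝ}

lemma feynmanKacWeight_pos : 0 < feynmanKacWeight a t s :=
  Real.exp_pos _

lemma continuousOn_feynmanKacWeight (ha : IntervalIntegrable a volume t T) :
    ContinuousOn (feynmanKacWeight a t) (uIcc t T) :=
  (intervalIntegral.continuousOn_primitive_interval' ha left_mem_uIcc).rexp

lemma intervalIntegrable_mul_feynmanKacWeight (ha : IntervalIntegrable a volume t T)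
    (hg : IntervalIntegrable g volume t T) :
    IntervalIntegrable (fun s ↦ g s * feynmanKacWeight a t s) volume t T :=
  hg.mul_continuousOn (continuousOn_feynmanKacWeight ha)

lemma intervalIntegral_le_of_mem_Icc (ha : IntervalIntegrable a volume t T)
    (haM : ∀ r ∈ Icc t T, a r ≤ M) (hM : 0 ≤ M) (hs : s ∈ Icc t T) :
    ∫ r in t..s, a r ≤ (T - t) * M := by
  have hsub : uIcc t s ⊆ uIcc t T := uIcc_subset_uIcc_left (Icc_subset_uIcc hs)
  calc ∫ r in t..s, a r ≤ (s - t) * M :=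
        intervalIntegral_le_mul_of_le hs.1 (ha.mono_set hsub) fun r hr ↦
          haM r ⟨hr.1, hr.2.trans hs.2⟩
    _ ≤ (T - t) * M := by gcongr; exact hs.2

lemma feynmanKacWeight_le (ha : IntervalIntegrable a volume t T)
    (haM : ∀ r ∈ Icc t T, a r ≤ M) (hM : 0 ≤ M) (hs : s ∈ Icc t T) :
    feynmanKacWeight a t s ≤ Real.exp ((T - t) * M) :=
  Real.exp_le_exp.2 (intervalIntegral_le_of_mem_Icc ha haM hM hs)

lemma abs_mul_feynmanKacWeight_le {p : ℝ} (ha : IntervalIntegrable a volume t T)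
    (haM : ∀ r ∈ Icc t T, a r ≤ M) (hM : 0 ≤ M) (hs : s ∈ Icc t T) (hp : |p| ≤ N) :
    |p * feynmanKacWeight a t s| ≤ N * Real.exp ((T - t) * M) := by
  rw [abs_mul, abs_of_pos feynmanKacWeight_pos]
  exact mul_le_mul hp (feynmanKacWeight_le ha haM hM hs) feynmanKacWeight_pos.le
    ((abs_nonneg _).trans hp)

lemma abs_feynmanKacWeight_sub_le (ha : IntervalIntegrable a volume t T)
    (hb : IntervalIntegrable b volume t T) (haM : ∀ r ∈ Icc t T, a r ≤ M)
    (hbM : ∀ r ∈ Icc t T, b r ≤ M) (hM : 0 ≤ M) (hab : ∀ r ∈ Icc t T, |a r - b r| ≤ L)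
    (hs : s ∈ Icc t T) :
    |feynmanKacWeight a t s - feynmanKacWeight b t s|
      ≤ Real.exp ((T - t) * M) * (L * (s - t)) := by
  have hsub : uIcc t s ⊆ uIcc t T := uIcc_subset_uIcc_left (Icc_subset_uIcc hs)
  have hint : |(∫ r in t..s, a r) - ∫ r in t..s, b r| ≤ L * (s - t) := by
    rw [← intervalIntegral.integral_sub (ha.mono_set hsub) (hb.mono_set hsub),
      ← abs_of_nonneg (sub_nonneg.2 hs.1), ← Real.norm_eq_abs]
    refine intervalIntegral.norm_integral_le_of_norm_le_const fun r hr ↦ ?_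
    rw [uIoc_of_le hs.1] at hr
    exact hab r ⟨hr.1.le, hr.2.trans hs.2⟩
  calc |feynmanKacWeight a t s - feynmanKacWeight b t s|
      ≤ Real.exp ((T - t) * M) * |(∫ r in t..s, a r) - ∫ r in t..s, b r| :=
        abs_exp_sub_exp_le (intervalIntegral_le_of_mem_Icc ha haM hM hs)
          (intervalIntegral_le_of_mem_Icc hb hbM hM hs)
    _ ≤ Real.exp ((T - t) * M) * (L * (s - t)) := by gcongr

lemma abs_mul_feynmanKacWeight_sub_le {p q : ℝ} (ha : IntervalIntegrable a volume t T)
    (hb : IntervalIntegrable b volume t T) (haM : ∀ r ∈ Icc t T, a r ≤ M)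
    (hbM : ∀ r ∈ Icc t T, b r ≤ M) (hM : 0 ≤ M) (hab : ∀ r ∈ Icc t T, |a r - b r| ≤ L)
    (hpq : |p - q| ≤ P) (hq : |q| ≤ N) (hs : s ∈ Icc t T) :
    |p * feynmanKacWeight a t s - q * feynmanKacWeight b t s|
      ≤ Real.exp ((T - t) * M) * (P + N * L * (s - t)) := by
  have hN : 0 ≤ N := (abs_nonneg _).trans hq
  calc |p * feynmanKacWeight a t s - q * feynmanKacWeight b t s|
      = |(p - q) * feynmanKacWeight a t s
          + q * (feynmanKacWeight a t s - feynmanKacWeight b t s)| := by ring_nf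
    _ ≤ |(p - q) * feynmanKacWeight a t s|
          + |q| * |feynmanKacWeight a t s - feynmanKacWeight b t s| := by
        rw [← abs_mul q]
        exact abs_add_le _ _
    _ ≤ P * Real.exp ((T - t) * M) + N * (Real.exp ((T - t) * M) * (L * (s - t))) := by
        gcongr
        · exact abs_mul_feynmanKacWeight_le ha haM hM hs hpq
        · exact abs_feynmanKacWeight_sub_le ha hb haM hbM hM hab hs
    _ = Real.exp ((T - t) * M) * (P + N * L * (s - t)) := by ring

lemma abs_integral_mul_feynmanKacWeight_sub_le (htT : t ≤ T)
    (ha : IntervalIntegrable a volume t T) (hb : IntervalIntegrable b volume t T)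
    (hg : IntervalIntegrable g volume t T) (hh : IntervalIntegrable h volume t T)
    (haM : ∀ r ∈ Icc t T, a r ≤ M) (hbM : ∀ r ∈ Icc t T, b r ≤ M) (hM : 0 ≤ M)
    (hab : ∀ r ∈ Icc t T, |a r - b r| ≤ L) (hgh : ∀ r ∈ Icc t T, |g r - h r| ≤ P)
    (hhN : ∀ r ∈ Icc t T, |h r| ≤ N) :
    |(∫ s in t..T, g s * feynmanKacWeight a t s) - ∫ s in t..T, h s * feynmanKacWeight b t s|
      ≤ Real.exp ((T - t) * M) * (P * (T - t) + N * L * (T - t) ^ 2 / 2) := by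
  rw [← intervalIntegral.integral_sub (intervalIntegrable_mul_feynmanKacWeight ha hg)
      (intervalIntegrable_mul_feynmanKacWeight hb hh),
    ← integral_add_mul_sub, ← intervalIntegral.integral_const_mul, ← Real.norm_eq_abs]
  have hbound : Continuous fun s ↦ Real.exp ((T - t) * M) * (P + N * L * (s - t)) := by fun_prop
  refine intervalIntegral.norm_integral_le_of_norm_le htT (.of_forall fun s hs ↦ ?_)
    (hbound.intervalIntegrable _ _)
  have hs' : s ∈ Icc t T := Ioc_subset_Icc_self hs
  exact abs_mul_feynmanKacWeight_sub_le ha hb haM hbM hM hab (hgh s hs') (hhN s hs') hs'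

end Weight

/-- The random variable whose expectation is the Feynman–Kac solution, as a functional of the path
`p` of the process: terminal payoff `φ`, potential `c` and running source `f`. -/
noncomputable def feynmanKacPathFunctional {E : Type*} (φ c f : E → ℝ) (t T : ℝ) (p : ℝ → E) : ℝ :=
  φ (p T) * feynmanKacWeight (fun r ↦ c (p r)) t T
    - ∫ s in t..T, f (p s) * feynmanKacWeight (fun r ↦ c (p r)) t s

section Integrability

lemma measurable_uncurry_mul_feynmanKacWeight {Ω E : Type*} [MeasurableSpace Ω]
    [MeasurableSpace E] {X : Ω → ℝ → E} {g c : E → ℝ} (hg : Measurable g) (hc : Measurable c)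
    (hX : Measurable (Function.uncurry X)) (t : ℝ) :
    Measurable (Function.uncurry fun ω s ↦
      g (X ω s) * feynmanKacWeight (fun r ↦ c (X ω r)) t s) :=
  (hg.comp hX).mul
    (measurable_uncurry_intervalIntegral (a := fun ω r ↦ c (X ω r)) (hc.comp hX) t).exp

variable {E : Type*} [TopologicalSpace E] {φ c f : E → ℝ} {t T Mφ Mc Mf : ℝ}

lemma intervalIntegrable_comp_path {g : E → ℝ} {p : ℝ → E} (hg : Continuous g)
    (hp : ContinuousOn p (uIcc t T)) : IntervalIntegrable (fun s ↦ g (p s)) volume t T :=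
  (hg.comp_continuousOn hp).intervalIntegrable

variable {Ω : Type*} [MeasurableSpace Ω] {μ : Measure Ω} [IsFiniteMeasure μ] [MeasurableSpace E]
  [OpensMeasurableSpace E] {X : Ω → ℝ → E}

lemma integrable_terminal_mul_feynmanKacWeight (htT : t ≤ T)
    (hφ : Continuous φ) (hc : Continuous c) (hφM : ∀ z, |φ z| ≤ Mφ) (hcM : ∀ z, c z ≤ Mc)
    (hMc : 0 ≤ Mc) (hX : Measurable (Function.uncurry X))
    (hXc : ∀ ω, ContinuousOn (X ω) (Icc t T)) :
    Integrable (fun ω ↦ φ (X ω T) * feynmanKacWeight (fun r ↦ c (X ω r)) t T) μ := by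
  have hmeas : Measurable fun ω ↦ φ (X ω T) * feynmanKacWeight (fun r ↦ c (X ω r)) t T :=
    (measurable_uncurry_mul_feynmanKacWeight hφ.measurable hc.measurable hX t).comp
      measurable_prodMk_right
  rw [← uIcc_of_le htT] at hXc
  exact .of_bound hmeas.aestronglyMeasurable _ (.of_forall fun ω ↦
    abs_mul_feynmanKacWeight_le (intervalIntegrable_comp_path hc (hXc ω)) (fun _ _ ↦ hcM _) hMc
      (right_mem_Icc.2 htT) (hφM _))

lemma integrable_integral_source_mul_feynmanKacWeight (htT : t ≤ T)
    (hf : Continuous f) (hc : Continuous c) (hfM : ∀ z, |f z| ≤ Mf) (hcM : ∀ z, c z ≤ Mc)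
    (hMc : 0 ≤ Mc) (hX : Measurable (Function.uncurry X))
    (hXc : ∀ ω, ContinuousOn (X ω) (Icc t T)) :
    Integrable (fun ω ↦ ∫ s in t..T, f (X ω s) * feynmanKacWeight (fun r ↦ c (X ω r)) t s) μ := by
  have hmeas : Measurable fun ω ↦
      ∫ s in t..T, f (X ω s) * feynmanKacWeight (fun r ↦ c (X ω r)) t s :=
    (measurable_uncurry_intervalIntegral (measurable_uncurry_mul_feynmanKacWeight hf.measurable
      hc.measurable hX t) t).comp measurable_prodMk_right
  rw [← uIcc_of_le htT] at hXc
  refine .of_bound hmeas.aestronglyMeasurable (Mf * Real.exp ((T - t) * Mc) * |T - t|)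
    (.of_forall fun ω ↦ intervalIntegral.norm_integral_le_of_norm_le_const fun s hs ↦ ?_)
  rw [uIoc_of_le htT] at hs
  exact abs_mul_feynmanKacWeight_le (intervalIntegrable_comp_path hc (hXc ω))
    (fun _ _ ↦ hcM _) hMc (Ioc_subset_Icc_self hs) (hfM _)

lemma integrable_feynmanKacPathFunctional (htT : t ≤ T)
    (hφ : Continuous φ) (hc : Continuous c) (hf : Continuous f) (hφM : ∀ z, |φ z| ≤ Mφ)
    (hcM : ∀ z, c z ≤ Mc) (hMc : 0 ≤ Mc) (hfM : ∀ z, |f z| ≤ Mf)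
    (hX : Measurable (Function.uncurry X)) (hXc : ∀ ω, ContinuousOn (X ω) (Icc t T)) :
    Integrable (fun ω ↦ feynmanKacPathFunctional φ c f t T (X ω)) μ :=
  (integrable_terminal_mul_feynmanKacWeight htT hφ hc hφM hcM hMc hX hXc).sub
    (integrable_integral_source_mul_feynmanKacWeight htT hf hc hfM hcM hMc hX hXc)

end Integrability

section Holder

variable {E : Type*} [PseudoMetricSpace E] {φ c f : E → ℝ} {t T Mφ Mc Mf : ℝ}
  {lam Kφ Kc Kf : ℝ≥0}

theorem abs_feynmanKacPathFunctional_sub_le {p q : ℝ → E} {δ : ℝ} (htT : t ≤ T)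
    (hlam : 0 < lam) (hφ : HolderWith Kφ lam φ) (hc : HolderWith Kc lam c)
    (hf : HolderWith Kf lam f) (hφM : ∀ z, |φ z| ≤ Mφ) (hcM : ∀ z, c z ≤ Mc) (hMc : 0 ≤ Mc)
    (hfM : ∀ z, |f z| ≤ Mf) (hp : ContinuousOn p (Icc t T)) (hq : ContinuousOn q (Icc t T))
    (hpq : ∀ s ∈ Icc t T, dist (p s) (q s) ≤ δ) :
    |feynmanKacPathFunctional φ c f t T p - feynmanKacPathFunctional φ c f t T q|
      ≤ Real.exp ((T - t) * Mc)
          * (Kφ + Mφ * Kc * (T - t) + Kf * (T - t) + Mf * Kc * (T - t) ^ 2 / 2)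
          * δ ^ (lam : ℝ) := by
  have hT : T ∈ Icc t T := right_mem_Icc.2 htT
  rw [← uIcc_of_le htT] at hp hq
  have hcp := intervalIntegrable_comp_path (hc.continuous hlam) hp
  have hcq := intervalIntegrable_comp_path (hc.continuous hlam) hq
  have hfp := intervalIntegrable_comp_path (hf.continuous hlam) hp
  have hfq := intervalIntegrable_comp_path (hf.continuous hlam) hq
  have hcpq : ∀ r ∈ Icc t T, |c (p r) - c (q r)| ≤ Kc * δ ^ (lam : ℝ) := fun r hr ↦
    hc.dist_le_of_le (hpq r hr)
  have hfpq : ∀ r ∈ Icc t T, |f (p r) - f (q r)| ≤ Kf * δ ^ (lam : ℝ) := fun r hr ↦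
    hf.dist_le_of_le (hpq r hr)
  have hterminal := abs_mul_feynmanKacWeight_sub_le hcp hcq (fun _ _ ↦ hcM _) (fun _ _ ↦ hcM _)
    hMc hcpq (hφ.dist_le_of_le (hpq T hT)) (hφM (q T)) hT
  have hsource := abs_integral_mul_feynmanKacWeight_sub_le htT hcp hcq hfp hfq
    (fun _ _ ↦ hcM _) (fun _ _ ↦ hcM _) hMc hcpq hfpq fun _ _ ↦ hfM _
  rw [feynmanKacPathFunctional, feynmanKacPathFunctional, sub_sub_sub_comm]
  refine (abs_sub _ _).trans ((add_le_add hterminal hsource).trans_eq ?_)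
  ring

lemma abs_feynmanKacPathFunctional_sub_le_iSup {p q : ℝ → E} (htT : t ≤ T)
    (hlam : 0 < lam) (hφ : HolderWith Kφ lam φ) (hc : HolderWith Kc lam c)
    (hf : HolderWith Kf lam f) (hφM : ∀ z, |φ z| ≤ Mφ) (hcM : ∀ z, c z ≤ Mc) (hMc : 0 ≤ Mc)
    (hfM : ∀ z, |f z| ≤ Mf) (hp : ContinuousOn p (Icc t T)) (hq : ContinuousOn q (Icc t T)) :
    |feynmanKacPathFunctional φ c f t T p - feynmanKacPathFunctional φ c f t T q|
      ≤ Real.exp ((T - t) * Mc)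
          * (Kφ + Mφ * Kc * (T - t) + Kf * (T - t) + Mf * Kc * (T - t) ^ 2 / 2)
          * (⨆ s : Icc t T, dist (p s) (q s) ^ 2) ^ ((lam : ℝ) / 2) := by
  have hsup : 0 ≤ ⨆ s : Icc t T, dist (p s) (q s) ^ 2 := Real.iSup_nonneg fun _ ↦ sq_nonneg _
  rw [← Real.sq_sqrt hsup, sq_rpow_half (Real.sqrt_nonneg _)]
  exact abs_feynmanKacPathFunctional_sub_le htT hlam hφ hc hf hφM hcM hMc hfM hp hq
    fun s hs ↦ Real.le_sqrt_of_sq_le (dist_sq_le_iSup_dist_sq hp hq hs)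

variable {Ω : Type*} [MeasurableSpace Ω] {μ : Measure Ω} [IsProbabilityMeasure μ]
  [MeasurableSpace E] [OpensMeasurableSpace E]

theorem abs_integral_feynmanKacPathFunctional_sub_le {X Y : Ω → ℝ → E} {m : ℝ}
    (htT : t ≤ T) (hlam : 0 < lam) (hlam2 : lam ≤ 2) (hφ : HolderWith Kφ lam φ)
    (hc : HolderWith Kc lam c) (hf : HolderWith Kf lam f) (hφM : ∀ z, |φ z| ≤ Mφ)
    (hcM : ∀ z, c z ≤ Mc) (hMc : 0 ≤ Mc) (hfM : ∀ z, |f z| ≤ Mf)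
    (hX : Measurable (Function.uncurry X))
    (hY : Measurable (Function.uncurry Y)) (hXc : ∀ ω, ContinuousOn (X ω) (Icc t T))
    (hYc : ∀ ω, ContinuousOn (Y ω) (Icc t T))
    (hint : Integrable (fun ω ↦ ⨆ s : Icc t T, dist (X ω s) (Y ω s) ^ 2) μ)
    (hm : ∫ ω, ⨆ s : Icc t T, dist (X ω s) (Y ω s) ^ 2 ∂μ ≤ m) :
    |(∫ ω, feynmanKacPathFunctional φ c f t T (X ω) ∂μ)
        - ∫ ω, feynmanKacPathFunctional φ c f t T (Y ω) ∂μ|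
      ≤ Real.exp ((T - t) * Mc)
          * (Kφ + Mφ * Kc * (T - t) + Kf * (T - t) + Mf * Kc * (T - t) ^ 2 / 2)
          * m ^ ((lam : ℝ) / 2) := by
  set S : Ω → ℝ := fun ω ↦ ⨆ s : Icc t T, dist (X ω s) (Y ω s) ^ 2
  set Γ : ℝ := Real.exp ((T - t) * Mc)
    * (Kφ + Mφ * Kc * (T - t) + Kf * (T - t) + Mf * Kc * (T - t) ^ 2 / 2)
  have hS0 (ω : Ω) : 0 ≤ S ω := Real.iSup_nonneg fun _ ↦ sq_nonneg _
  have hhalf0 : 0 ≤ (lam : ℝ) / 2 := by positivity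
  have hhalf1 : (lam : ℝ) / 2 ≤ 1 := (div_le_one two_pos).2 (mod_cast hlam2)
  have hpath (ω : Ω) : ‖feynmanKacPathFunctional φ c f t T (X ω)
      - feynmanKacPathFunctional φ c f t T (Y ω)‖ ≤ Γ * S ω ^ ((lam : ℝ) / 2) :=
    abs_feynmanKacPathFunctional_sub_le_iSup htT hlam hφ hc hf hφM hcM hMc hfM (hXc ω) (hYc ω)
  have hΓ : 0 ≤ Γ := by
    obtain ⟨ω⟩ := nonempty_of_isProbabilityMeasure μ
    have hMφ : 0 ≤ Mφ := (abs_nonneg _).trans (hφM (X ω t))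
    have hMf : 0 ≤ Mf := (abs_nonneg _).trans (hfM (X ω t))
    positivity
  rw [← integral_sub
    (integrable_feynmanKacPathFunctional htT (hφ.continuous hlam) (hc.continuous hlam)
      (hf.continuous hlam) hφM hcM hMc hfM hX hXc)
    (integrable_feynmanKacPathFunctional htT (hφ.continuous hlam) (hc.continuous hlam)
      (hf.continuous hlam) hφM hcM hMc hfM hY hYc)]
  calc |∫ ω, feynmanKacPathFunctional φ c f t T (X ω)
          - feynmanKacPathFunctional φ c f t T (Y ω) ∂μ|
      ≤ ∫ ω, Γ * S ω ^ ((lam : ℝ) / 2) ∂μ :=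
        norm_integral_le_of_norm_le ((integrable_rpow_of_le_one hint hhalf0 hhalf1).const_mul Γ)
          (.of_forall hpath)
    _ = Γ * ∫ ω, S ω ^ ((lam : ℝ) / 2) ∂μ := integral_const_mul _ _
    _ ≤ Γ * (∫ ω, S ω ∂μ) ^ ((lam : ℝ) / 2) := by
        gcongr
        exact integral_rpow_le_rpow_integral hint hS0 hhalf0 hhalf1
    _ ≤ Γ * m ^ ((lam : ℝ) / 2) := by
        gcongr
        exact integral_nonneg hS0

theorem feynmanKac_holder_general {ι : Type*} [PseudoMetricSpace ι]
    {C : ℝ} {X : ι → Ω → ℝ → E} (htT : t ≤ T) (hlam : 0 < lam) (hlam2 : lam ≤ 2)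
    (hφ : HolderWith Kφ lam φ) (hc : HolderWith Kc lam c) (hf : HolderWith Kf lam f)
    (hφM : ∀ z, |φ z| ≤ Mφ) (hcM : ∀ z, c z ≤ Mc) (hMc : 0 ≤ Mc) (hfM : ∀ z, |f z| ≤ Mf)
    (hX : ∀ x, Measurable (Function.uncurry (X x)))
    (hXc : ∀ x ω, ContinuousOn (X x ω) (Icc t T)) (hC : 0 ≤ C)
    (hint : ∀ x y, Integrable (fun ω ↦ ⨆ s : Icc t T, dist (X x ω s) (X y ω s) ^ 2) μ)
    (hstab : ∀ x y,
      ∫ ω, ⨆ s : Icc t T, dist (X x ω s) (X y ω s) ^ 2 ∂μ ≤ C * dist x y ^ 2) (x y : ι) :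
    |(∫ ω, feynmanKacPathFunctional φ c f t T (X x ω) ∂μ)
        - ∫ ω, feynmanKacPathFunctional φ c f t T (X y ω) ∂μ|
      ≤ Real.exp ((T - t) * Mc) * C ^ ((lam : ℝ) / 2)
          * (Kφ + Mφ * Kc * (T - t) + Kf * (T - t) + Mf * Kc * (T - t) ^ 2 / 2)
          * dist x y ^ (lam : ℝ) := by
  have hmoment : (C * dist x y ^ 2) ^ ((lam : ℝ) / 2)
      = C ^ ((lam : ℝ) / 2) * dist x y ^ (lam : ℝ) := by
    rw [Real.mul_rpow hC (sq_nonneg _), sq_rpow_half dist_nonneg]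
  refine (abs_integral_feynmanKacPathFunctional_sub_le htT hlam hlam2 hφ hc hf hφM hcM hMc hfM
    (hX x) (hX y) (hXc x) (hXc y) (hint x y) (hstab x y)).trans_eq ?_
  rw [hmoment]
  ring

end Holder

lemma feynmanKac_eq_integral_feynmanKacPathFunctional {n : ℕ} {Ω : Type*} [MeasurableSpace Ω]
    {μ : Measure Ω} [IsFiniteMeasure μ]
    {X : EuclideanSpace ℝ (Fin n) → Ω → ℝ → EuclideanSpace ℝ (Fin n)} {t T Mφ Mc Mf : ℝ}
    {φ c f : EuclideanSpace ℝ (Fin n) → ℝ} {x : EuclideanSpace ℝ (Fin n)} (htT : t ≤ T)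
    (hφ : Continuous φ) (hc : Continuous c) (hf : Continuous f) (hφM : ∀ z, |φ z| ≤ Mφ)
    (hcM : ∀ z, c z ≤ Mc) (hMc : 0 ≤ Mc) (hfM : ∀ z, |f z| ≤ Mf)
    (hX : Measurable (Function.uncurry (X x))) (hXc : ∀ ω, ContinuousOn (X x ω) (Icc t T)) :
    feynmanKac μ X t T φ c f x = ∫ ω, feynmanKacPathFunctional φ c f t T (X x ω) ∂μ :=
  (integral_sub (integrable_terminal_mul_feynmanKacWeight htT hφ hc hφM hcM hMc hX hXc)
    (integrable_integral_source_mul_feynmanKacWeight htT hf hc hfM hcM hMc hX hXc)).symm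

/-- Hölder continuity in space of the Feynman–Kac solution: with bounded λ-Hölder data
`φ, c, f` and the stability estimate `E[sup_{t≤s≤T}|X_x(s)−X_y(s)|²] ≤ C_R|x−y|²` on the
ball of radius `R`, one has `|u(x)−u(y)| ≤ Γ|x−y|^λ` with
`Γ = e^{(T−t)M_c} C_R^{λ/2} (K_φ + M_φ K_c (T−t) + K_f (T−t) + M_f K_c (T−t)²/2)`. -/
theorem feynmanKac_holder
    (n : ℕ) (hn : 1 ≤ n) (Ω : Type*) [MeasurableSpace Ω] (μ : Measure Ω)
    [IsProbabilityMeasure μ] (t T : ℝ) (ht : 0 ≤ t) (htT : t < T)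
    (lam : ℝ) (hlam : 0 < lam) (hlam1 : lam ≤ 1)
    (X : EuclideanSpace ℝ (Fin n) → Ω → ℝ → EuclideanSpace ℝ (Fin n))
    (hXmeas : ∀ x, Measurable (Function.uncurry (X x)))
    (hXcont : ∀ x ω, ContinuousOn (X x ω) (Set.Icc t T))
    (φ c f : EuclideanSpace ℝ (Fin n) → ℝ)
    (Mφ Mc Mf Kφ Kc Kf : ℝ)
    (hφb : ∀ z, |φ z| ≤ Mφ) (hcb : ∀ z, |c z| ≤ Mc) (hfb : ∀ z, |f z| ≤ Mf)
    (hφH : ∀ z w, |φ z - φ w| ≤ Kφ * ‖z - w‖ ^ lam)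
    (hcH : ∀ z w, |c z - c w| ≤ Kc * ‖z - w‖ ^ lam)
    (hfH : ∀ z w, |f z - f w| ≤ Kf * ‖z - w‖ ^ lam)
    (R C_R : ℝ) (hR : 0 < R) (hCR : 0 < C_R)
    (hint : ∀ x y : EuclideanSpace ℝ (Fin n), ‖x‖ ≤ R → ‖y‖ ≤ R →
      Integrable (fun ω => ⨆ s : Set.Icc t T, ‖X x ω (s : ℝ) - X y ω (s : ℝ)‖ ^ 2) μ)
    (hstab : ∀ x y : EuclideanSpace ℝ (Fin n), ‖x‖ ≤ R → ‖y‖ ≤ R →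
      (∫ ω, (⨆ s : Set.Icc t T, ‖X x ω (s : ℝ) - X y ω (s : ℝ)‖ ^ 2) ∂μ)
        ≤ C_R * ‖x - y‖ ^ 2) :
    ∀ x y : EuclideanSpace ℝ (Fin n), ‖x‖ ≤ R → ‖y‖ ≤ R →
      |feynmanKac μ X t T φ c f x - feynmanKac μ X t T φ c f y|
        ≤ Real.exp ((T - t) * Mc) * C_R ^ (lam / 2)
            * (Kφ + Mφ * Kc * (T - t) + Kf * (T - t) + Mf * Kc * (T - t) ^ 2 / 2)
            * ‖x - y‖ ^ lam := by
  have : Nonempty (Fin n) := ⟨⟨0, hn⟩⟩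
  lift lam to ℝ≥0 using hlam.le
  lift Kφ to ℝ≥0 using nonneg_of_abs_sub_le_mul_norm_rpow hφH
  lift Kc to ℝ≥0 using nonneg_of_abs_sub_le_mul_norm_rpow hcH
  lift Kf to ℝ≥0 using nonneg_of_abs_sub_le_mul_norm_rpow hfH
  have hφ := holderWith_of_abs_sub_le_mul_norm_rpow hφH
  have hc := holderWith_of_abs_sub_le_mul_norm_rpow hcH
  have hf := holderWith_of_abs_sub_le_mul_norm_rpow hfH
  have hcM (z) : c z ≤ Mc := (le_abs_self _).trans (hcb z)
  have hMc : 0 ≤ Mc := (abs_nonneg _).trans (hcb 0)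
  have hlam2 : lam ≤ 2 := le_trans (mod_cast hlam1) one_le_two
  have hu (x) := feynmanKac_eq_integral_feynmanKacPathFunctional (μ := μ) htT.le
    (hφ.continuous hlam) (hc.continuous hlam) (hf.continuous hlam) hφb hcM hMc hfb
    (hXmeas x) (hXcont x)
  simp only [← dist_eq_norm, hu] at hint hstab ⊢
  exact fun x y hx hy ↦ feynmanKac_holder_general (ι := {x : EuclideanSpace ℝ (Fin n) // ‖x‖ ≤ R})
    (X := fun x ↦ X x) htT.le hlam hlam2 hφ hc hf hφb hcM hMc hfb (fun x ↦ hXmeas x)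
    (fun x ↦ hXcont x) hCR.le (fun x y ↦ hint x y x.2 y.2) (fun x y ↦ hstab x y x.2 y.2)
    ⟨x, hx⟩ ⟨y, hy⟩
end

section
/- Let (Ω, ℱ, ℙ) be a probability space, n ≥ 1, 0 ≤ t < T < ∞, 0 < λ̃ ≤ 1, and for each x ∈ ℝⁿ let X_x : Ω × [t,T] → ℝⁿ be jointly measurable with continuous sample paths. Let K ⊂ ℝⁿ be compact. Let φ : ℝⁿ → ℝ be λ̃-Hölder continuous with constant C_φ, and let c : ℝⁿ → ℝ be bounded with ‖c‖_∞ ≤ M_c and λ̃-Hölder continuous with constant K_c. Assume: (i) there is C_K > 0 such that for all x, y ∈ K the random variable ω ↦ sup_{t≤s≤T}|X_x(ω,s) − X_y(ω,s)|² is integrable with E[ sup_{t≤s≤T} |X_x(s) − X_y(s)|² ] ≤ C_K |x−y|²; (ii) there is M_0 > 0 such that sup_{y∈K} E[ |φ(X_y(T))|^{2/(2−λ̃)} ] ≤ M_0. Define u(x) := E[ φ(X_x(T)) · exp(∫_t^T c(X_x(s)) ds) ] for x ∈ K. Then for all x, y ∈ K: |u(x) − u(y)| ≤ Γ·|x−y|^{λ̃},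 where Γ = e^{(T−t)M_c} · C_K^{λ̃/2} · ( C_φ + K_c · M_0^{1−λ̃/2} · (T−t) ). -/
open MeasureTheory

/-!
Write `D = sup_{t ≤ s ≤ T} |X_x(s) - X_y(s)|`. Along a single sample path, Hölder continuity of `φ`
and `c` together with the mean value bound for `exp` on `(-∞, (T - t) M_c]` shows that the two
payoffs differ by at most `e^{(T - t) M_c} (C_φ + K_c (T - t) |φ(X_y(T))|) D^λ`. In expectation,
Hölder's inequality with the conjugate exponents `2 / (2 - λ)` and `2 / λ` turns `|φ(X_y(T))| D^λ`
into the moment of `φ(X_y(T))` and `E[D²]^{λ/2}`.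
-/

open scoped NNReal

section MeanInequalities

variable {α : Type*} [MeasurableSpace α] {μ : Measure α} {f g : α → ℝ}

theorem integrable_rpow_mul_rpow {a b : ℝ} (hf : Integrable f μ) (hg : Integrable g μ)
    (hf₀ : ∀ x, 0 ≤ f x) (hg₀ : ∀ x, 0 ≤ g x) (ha : 0 ≤ a) (hb : 0 ≤ b) (hab : a + b = 1) :
    Integrable (fun x ↦ f x ^ a * g x ^ b) μ := by
  refine ((hf.const_mul a).add (hg.const_mul b)).mono'
    ((hf.aemeasurable.pow_const a).mul (hg.aemeasurable.pow_const b)).aestronglyMeasurable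
    (.of_forall fun x ↦ ?_)
  rw [Real.norm_of_nonneg (mul_nonneg (Real.rpow_nonneg (hf₀ x) a) (Real.rpow_nonneg (hg₀ x) b))]
  exact Real.geom_mean_le_arith_mean2_weighted ha hb (hf₀ x) (hg₀ x) hab

theorem integral_rpow_mul_rpow_le {a b : ℝ} (hf : Integrable f μ) (hg : Integrable g μ)
    (hf₀ : ∀ x, 0 ≤ f x) (hg₀ : ∀ x, 0 ≤ g x) (ha : 0 ≤ a) (hb : 0 ≤ b) (hab : a + b = 1) :
    ∫ x, f x ^ a * g x ^ b ∂μ ≤ (∫ x, f x ∂μ) ^ a * (∫ x, g x ∂μ) ^ b := by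
  have hfg₀ (x : α) : 0 ≤ f x ^ a * g x ^ b :=
    mul_nonneg (Real.rpow_nonneg (hf₀ x) a) (Real.rpow_nonneg (hg₀ x) b)
  have hIf : 0 ≤ ∫ x, f x ∂μ := integral_nonneg hf₀
  have hIg : 0 ≤ ∫ x, g x ∂μ := integral_nonneg hg₀
  rw [← ENNReal.ofReal_le_ofReal_iff (by positivity), ENNReal.ofReal_mul (by positivity),
    ← ENNReal.ofReal_rpow_of_nonneg hIf ha, ← ENNReal.ofReal_rpow_of_nonneg hIg hb,
    ofReal_integral_eq_lintegral_ofReal hf (.of_forall hf₀),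
    ofReal_integral_eq_lintegral_ofReal hg (.of_forall hg₀),
    ofReal_integral_eq_lintegral_ofReal (integrable_rpow_mul_rpow hf hg hf₀ hg₀ ha hb hab)
      (.of_forall hfg₀)]
  simp only [ENNReal.ofReal_mul (Real.rpow_nonneg (hf₀ _) a),
    ← ENNReal.ofReal_rpow_of_nonneg (hf₀ _) ha, ← ENNReal.ofReal_rpow_of_nonneg (hg₀ _) hb]
  exact ENNReal.lintegral_mul_norm_pow_le hf.aemeasurable.ennreal_ofReal
    hg.aemeasurable.ennreal_ofReal ha hb hab

theorem integrable_abs_mul_rpow {θ : ℝ} (hf : Integrable (fun x ↦ |f x| ^ (1 - θ)⁻¹) μ)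
    (hg : Integrable g μ) (hg₀ : ∀ x, 0 ≤ g x) (hθ₀ : 0 ≤ θ) (hθ₁ : θ < 1) :
    Integrable (fun x ↦ |f x| * g x ^ θ) μ := by
  have h := integrable_rpow_mul_rpow hf hg (fun x ↦ by positivity) hg₀ (sub_nonneg.2 hθ₁.le) hθ₀
    (sub_add_cancel 1 θ)
  simpa only [Real.rpow_inv_rpow (abs_nonneg _) (sub_pos.2 hθ₁).ne'] using h

theorem integral_abs_mul_rpow_le {θ : ℝ} (hf : Integrable (fun x ↦ |f x| ^ (1 - θ)⁻¹) μ)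
    (hg : Integrable g μ) (hg₀ : ∀ x, 0 ≤ g x) (hθ₀ : 0 ≤ θ) (hθ₁ : θ < 1) :
    ∫ x, |f x| * g x ^ θ ∂μ ≤
      (∫ x, |f x| ^ (1 - θ)⁻¹ ∂μ) ^ (1 - θ) * (∫ x, g x ∂μ) ^ θ := by
  have h := integral_rpow_mul_rpow_le hf hg (fun x ↦ by positivity) hg₀ (sub_nonneg.2 hθ₁.le) hθ₀
    (sub_add_cancel 1 θ)
  simpa only [Real.rpow_inv_rpow (abs_nonneg _) (sub_pos.2 hθ₁).ne'] using h

theorem integrable_of_integrable_abs_rpow [IsFiniteMeasure μ] {θ : ℝ}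
    (hfm : AEStronglyMeasurable f μ) (hf : Integrable (fun x ↦ |f x| ^ (1 - θ)⁻¹) μ)
    (hθ₀ : 0 ≤ θ) (hθ₁ : θ < 1) : Integrable f μ := by
  have h := integrable_abs_mul_rpow hf (integrable_const 1) (fun _ ↦ zero_le_one) hθ₀ hθ₁
  exact (integrable_norm_iff hfm).1 <| by
    simpa only [Real.one_rpow, mul_one, Real.norm_eq_abs] using h

theorem integrable_rpow_of_integrable [IsFiniteMeasure μ] {θ : ℝ} (hg : Integrable g μ)
    (hg₀ : ∀ x, 0 ≤ g x) (hθ₀ : 0 ≤ θ) (hθ₁ : θ ≤ 1) : Integrable (fun x ↦ g x ^ θ) μ := by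
  simpa only [Real.one_rpow, one_mul] using integrable_rpow_mul_rpow (integrable_const 1) hg
    (fun _ ↦ zero_le_one) hg₀ (sub_nonneg.2 hθ₁) hθ₀ (sub_add_cancel 1 θ)

theorem integral_rpow_le_rpow_integral_s17 [IsProbabilityMeasure μ] {θ : ℝ} (hg : Integrable g μ)
    (hg₀ : ∀ x, 0 ≤ g x) (hθ₀ : 0 ≤ θ) (hθ₁ : θ ≤ 1) :
    ∫ x, g x ^ θ ∂μ ≤ (∫ x, g x ∂μ) ^ θ := by
  simpa only [Real.one_rpow, one_mul, integral_const, probReal_univ, one_smul] using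
    integral_rpow_mul_rpow_le (integrable_const (μ := μ) 1) hg (fun _ ↦ zero_le_one) hg₀
      (sub_nonneg.2 hθ₁) hθ₀ (sub_add_cancel 1 θ)

theorem integrable_add_mul_abs_mul_rpow [IsFiniteMeasure μ] {θ : ℝ}
    (hf : Integrable (fun x ↦ |f x| ^ (1 - θ)⁻¹) μ) (hg : Integrable g μ) (hg₀ : ∀ x, 0 ≤ g x)
    (hθ₀ : 0 ≤ θ) (hθ₁ : θ < 1) (a b : ℝ) :
    Integrable (fun x ↦ (a + b * |f x|) * g x ^ θ) μ := by
  simp only [add_mul, mul_assoc]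
  exact ((integrable_rpow_of_integrable hg hg₀ hθ₀ hθ₁.le).const_mul a).add
    ((integrable_abs_mul_rpow hf hg hg₀ hθ₀ hθ₁).const_mul b)

theorem integral_add_mul_abs_mul_rpow_le [IsProbabilityMeasure μ] {θ a b : ℝ}
    (hf : Integrable (fun x ↦ |f x| ^ (1 - θ)⁻¹) μ) (hg : Integrable g μ) (hg₀ : ∀ x, 0 ≤ g x)
    (hθ₀ : 0 ≤ θ) (hθ₁ : θ < 1) (ha : 0 ≤ a) (hb : 0 ≤ b) :
    ∫ x, (a + b * |f x|) * g x ^ θ ∂μ ≤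
      (a + b * (∫ x, |f x| ^ (1 - θ)⁻¹ ∂μ) ^ (1 - θ)) * (∫ x, g x ∂μ) ^ θ := by
  have hIg := integrable_rpow_of_integrable hg hg₀ hθ₀ hθ₁.le
  have hIfg := integrable_abs_mul_rpow hf hg hg₀ hθ₀ hθ₁
  simp only [add_mul, mul_assoc]
  rw [integral_add (hIg.const_mul a) (hIfg.const_mul b), integral_const_mul, integral_const_mul]
  gcongr
  · exact integral_rpow_le_rpow_integral_s17 hg hg₀ hθ₀ hθ₁.le
  · exact integral_abs_mul_rpow_le hf hg hg₀ hθ₀ hθ₁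

end MeanInequalities

theorem abs_exp_sub_exp_le_exp_mul {a b m : ℝ} (ha : a ≤ m) (hb : b ≤ m) :
    |Real.exp a - Real.exp b| ≤ Real.exp m * |a - b| := by
  refine (convex_Iic m).norm_image_sub_le_of_norm_deriv_le
    (fun x _ ↦ Real.differentiableAt_exp) (fun x hx ↦ ?_) hb ha
  rw [Real.deriv_exp, Real.norm_eq_abs, Real.abs_exp]
  exact Real.exp_le_exp.2 hx

theorem exists_holderWith_of_abs_sub_le {E : Type*} [NormedAddCommGroup E] [NormedSpace ℝ E]
    [Nontrivial E] {f : E → ℝ} {C : ℝ} {r : ℝ≥0}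
    (hf : ∀ z w, |f z - f w| ≤ C * ‖z - w‖ ^ (r : ℝ)) :
    ∃ C' : ℝ≥0, (C' : ℝ) = C ∧ HolderWith C' r f := by
  obtain ⟨v, hv⟩ := exists_norm_eq E zero_le_one
  have hC : 0 ≤ C := by simpa [hv] using (abs_nonneg _).trans (hf v 0)
  lift C to ℝ≥0 using hC
  refine ⟨C, rfl, fun z w ↦ ?_⟩
  rw [edist_dist, edist_dist, ENNReal.ofReal_rpow_of_nonneg dist_nonneg r.coe_nonneg,
    ← ENNReal.ofReal_coe_nnreal, ← ENNReal.ofReal_mul C.coe_nonneg, Real.dist_eq, dist_eq_norm]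
  exact ENNReal.ofReal_le_ofReal (hf z w)

/-- The squared uniform distance `sup_{t ≤ s ≤ T} d(γ(s), η(s))²` of two paths on `[t, T]`. It is a
supremum of reals, hence meaningful only for paths at bounded distance, e.g. continuous ones. -/
noncomputable def supSqDist {E : Type*} [PseudoMetricSpace E] (t T : ℝ) (γ η : ℝ → E) : ℝ :=
  ⨆ s : Set.Icc t T, dist (γ s) (η s) ^ 2

/-- The Feynman–Kac functional `φ(γ(T)) exp(∫_t^T c(γ(s)) ds)` of a path `γ`, whose expectation
along a process started at `x` is the function `u(x)`. -/
noncomputable def feynmanKacPayoff {E : Type*} (φ c : E → ℝ) (t T : ℝ) (γ : ℝ → E) : ℝ :=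
  φ (γ T) * Real.exp (∫ s in t..T, c (γ s))

section Paths

variable {E : Type*} [PseudoMetricSpace E] {t T : ℝ} {γ η : ℝ → E}

theorem supSqDist_nonneg : 0 ≤ supSqDist t T γ η :=
  Real.iSup_nonneg fun _ ↦ sq_nonneg _

theorem dist_le_sqrt_supSqDist (hγ : ContinuousOn γ (Set.Icc t T))
    (hη : ContinuousOn η (Set.Icc t T)) {s : ℝ} (hs : s ∈ Set.Icc t T) :
    dist (γ s) (η s) ≤ √(supSqDist t T γ η) :=
  Real.le_sqrt_of_sq_le <|
    le_ciSup_set (f := fun s ↦ dist (γ s) (η s) ^ 2)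
      (isCompact_Icc.bddAbove_image ((continuous_dist.comp_continuousOn (hγ.prodMk hη)).pow 2)) hs

theorem intervalIntegral_comp_le {E : Type*} {c : E → ℝ} {M : ℝ} (hM : ∀ z, |c z| ≤ M)
    (htT : t ≤ T) (γ : ℝ → E) : ∫ s in t..T, c (γ s) ≤ (T - t) * M := by
  have h := intervalIntegral.norm_integral_le_of_norm_le_const (a := t) (b := T)
    (f := fun s ↦ c (γ s)) fun s _ ↦ hM (γ s)
  rw [abs_of_nonneg (sub_nonneg.2 htT), mul_comm] at h
  exact (le_abs_self _).trans h

variable {φ c : E → ℝ} {Cφ Kc r : ℝ≥0} {M d : ℝ}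

theorem abs_intervalIntegral_comp_sub_le (hc : HolderWith Kc r c) (hr : 0 < r) (htT : t ≤ T)
    (hγ : ContinuousOn γ (Set.Icc t T)) (hη : ContinuousOn η (Set.Icc t T))
    (hd : ∀ s ∈ Set.Icc t T, dist (γ s) (η s) ≤ d) :
    |(∫ s in t..T, c (γ s)) - ∫ s in t..T, c (η s)| ≤ Kc * d ^ (r : ℝ) * (T - t) := by
  have hcc : Continuous c := hc.continuous hr
  have hIγ : IntervalIntegrable (fun s ↦ c (γ s)) volume t T :=
    (hcc.comp_continuousOn hγ).intervalIntegrable_of_Icc htT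
  have hIη : IntervalIntegrable (fun s ↦ c (η s)) volume t T :=
    (hcc.comp_continuousOn hη).intervalIntegrable_of_Icc htT
  rw [← intervalIntegral.integral_sub hIγ hIη, ← abs_of_nonneg (sub_nonneg.2 htT)]
  refine intervalIntegral.norm_integral_le_of_norm_le_const (f := fun s ↦ c (γ s) - c (η s))
    fun s hs ↦ hc.dist_le_of_le (hd s ?_)
  rw [Set.uIoc_of_le htT] at hs
  exact Set.Ioc_subset_Icc_self hs

theorem abs_feynmanKacPayoff_sub_le (hφ : HolderWith Cφ r φ) (hc : HolderWith Kc r c) (hr : 0 < r)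
    (hM : ∀ z, |c z| ≤ M) (htT : t ≤ T) (hγ : ContinuousOn γ (Set.Icc t T))
    (hη : ContinuousOn η (Set.Icc t T)) (hd : ∀ s ∈ Set.Icc t T, dist (γ s) (η s) ≤ d) :
    |feynmanKacPayoff φ c t T γ - feynmanKacPayoff φ c t T η| ≤
      Real.exp ((T - t) * M) *
        ((Cφ + Kc * (T - t) * |φ (η T)|) * d ^ (r : ℝ)) := by
  unfold feynmanKacPayoff
  set I := ∫ s in t..T, c (γ s)
  set J := ∫ s in t..T, c (η s)
  set B := Real.exp ((T - t) * M)
  have hI : I ≤ (T - t) * M := intervalIntegral_comp_le hM htT γ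
  have hJ : J ≤ (T - t) * M := intervalIntegral_comp_le hM htT η
  have hterminal : |φ (γ T) - φ (η T)| ≤ Cφ * d ^ (r : ℝ) :=
    hφ.dist_le_of_le (hd T (Set.right_mem_Icc.2 htT))
  have hweight : |Real.exp I - Real.exp J| ≤ B * (Kc * d ^ (r : ℝ) * (T - t)) :=
    (abs_exp_sub_exp_le_exp_mul hI hJ).trans <| by
      gcongr
      exact abs_intervalIntegral_comp_sub_le hc hr htT hγ hη hd
  calc |φ (γ T) * Real.exp I - φ (η T) * Real.exp J|
      = |(φ (γ T) - φ (η T)) * Real.exp I + φ (η T) * (Real.exp I - Real.exp J)| := by ring_nf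
    _ ≤ |φ (γ T) - φ (η T)| * Real.exp I + |φ (η T)| * |Real.exp I - Real.exp J| := by
        simpa only [abs_mul, Real.abs_exp] using
          abs_add_le ((φ (γ T) - φ (η T)) * Real.exp I) (φ (η T) * (Real.exp I - Real.exp J))
    _ ≤ Cφ * d ^ (r : ℝ) * B + |φ (η T)| * (B * (Kc * d ^ (r : ℝ) * (T - t))) := by
        gcongr
        · exact (abs_nonneg _).trans hterminal
        · exact Real.exp_le_exp.2 hI
    _ = B * ((Cφ + Kc * (T - t) * |φ (η T)|) * d ^ (r : ℝ)) := by ring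

end Paths

section Processes

variable {Ω E : Type*} [MeasurableSpace Ω] {μ : Measure Ω} [MeasurableSpace E] {t T M : ℝ}
  {φ c : E → ℝ}

theorem measurable_intervalIntegral_comp {X : Ω → ℝ → E} (hc : Measurable c)
    (hX : Measurable (Function.uncurry X)) : Measurable fun ω ↦ ∫ s in t..T, c (X ω s) := by
  have h : StronglyMeasurable (Function.uncurry fun ω s ↦ c (X ω s)) :=
    (hc.comp hX).stronglyMeasurable
  exact h.integral_prod_right.measurable.sub h.integral_prod_right.measurable

theorem integrable_feynmanKacPayoff {X : Ω → ℝ → E} (hc : Measurable c)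
    (hX : Measurable (Function.uncurry X)) (hM : ∀ z, |c z| ≤ M) (htT : t ≤ T)
    (hφX : Integrable (fun ω ↦ φ (X ω T)) μ) :
    Integrable (fun ω ↦ feynmanKacPayoff φ c t T (X ω)) μ := by
  refine hφX.mul_bdd (c := Real.exp ((T - t) * M))
    (measurable_intervalIntegral_comp hc hX).exp.aestronglyMeasurable (.of_forall fun ω ↦ ?_)
  rw [Real.norm_eq_abs, Real.abs_exp]
  exact Real.exp_le_exp.2 (intervalIntegral_comp_le hM htT (X ω))

end Processes

section Expectations

variable {Ω E : Type*} [MeasurableSpace Ω] {μ : Measure Ω} [IsProbabilityMeasure μ]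
  [PseudoMetricSpace E] [MeasurableSpace E] [OpensMeasurableSpace E] {t T M : ℝ}
  {φ c : E → ℝ} {Cφ Kc r : ℝ≥0}

theorem abs_integral_feynmanKacPayoff_sub_le {X Y : Ω → ℝ → E}
    (hφ : HolderWith Cφ r φ) (hc : HolderWith Kc r c) (hr₀ : 0 < r) (hr₂ : r < 2)
    (hM : ∀ z, |c z| ≤ M) (htT : t ≤ T)
    (hX : Measurable (Function.uncurry X)) (hXc : ∀ ω, ContinuousOn (X ω) (Set.Icc t T))
    (hY : Measurable (Function.uncurry Y)) (hYc : ∀ ω, ContinuousOn (Y ω) (Set.Icc t T))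
    (hS : Integrable (fun ω ↦ supSqDist t T (X ω) (Y ω)) μ)
    (hφX : Integrable (fun ω ↦ |φ (X ω T)| ^ (1 - r / 2 : ℝ)⁻¹) μ)
    (hφY : Integrable (fun ω ↦ |φ (Y ω T)| ^ (1 - r / 2 : ℝ)⁻¹) μ) :
    |(∫ ω, feynmanKacPayoff φ c t T (X ω) ∂μ) - ∫ ω, feynmanKacPayoff φ c t T (Y ω) ∂μ| ≤
      Real.exp ((T - t) * M) *
        (Cφ + Kc * (T - t) * (∫ ω, |φ (Y ω T)| ^ (1 - r / 2 : ℝ)⁻¹ ∂μ) ^ (1 - r / 2 : ℝ)) *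
        (∫ ω, supSqDist t T (X ω) (Y ω) ∂μ) ^ (r / 2 : ℝ) := by
  set B := Real.exp ((T - t) * M)
  set S := fun ω ↦ supSqDist t T (X ω) (Y ω)
  have hθ₀ : (0 : ℝ) ≤ r / 2 := by positivity
  have hθ₁ : (r / 2 : ℝ) < 1 := (div_lt_one two_pos).2 (mod_cast hr₂)
  have hS₀ (ω : Ω) : 0 ≤ S ω := supSqDist_nonneg
  have hφm : Measurable φ := (hφ.continuous hr₀).measurable
  have hcm : Measurable c := (hc.continuous hr₀).measurable
  have hIX := integrable_feynmanKacPayoff hcm hX hM htT <| integrable_of_integrable_abs_rpow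
    (hφm.comp hX.of_uncurry_right).aestronglyMeasurable hφX hθ₀ hθ₁
  have hIY := integrable_feynmanKacPayoff hcm hY hM htT <| integrable_of_integrable_abs_rpow
    (hφm.comp hY.of_uncurry_right).aestronglyMeasurable hφY hθ₀ hθ₁
  have hIS := integrable_add_mul_abs_mul_rpow hφY hS hS₀ hθ₀ hθ₁ Cφ (Kc * (T - t))
  have hpath (ω : Ω) : |feynmanKacPayoff φ c t T (X ω) - feynmanKacPayoff φ c t T (Y ω)| ≤
      B * ((Cφ + Kc * (T - t) * |φ (Y ω T)|) * S ω ^ (r / 2 : ℝ)) := by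
    rw [Real.rpow_div_two_eq_sqrt _ (hS₀ ω)]
    exact abs_feynmanKacPayoff_sub_le hφ hc hr₀ hM htT (hXc ω) (hYc ω)
      fun s hs ↦ dist_le_sqrt_supSqDist (hXc ω) (hYc ω) hs
  rw [← integral_sub hIX hIY]
  calc _ ≤ ∫ ω, |feynmanKacPayoff φ c t T (X ω) - feynmanKacPayoff φ c t T (Y ω)| ∂μ :=
        abs_integral_le_integral_abs
    _ ≤ ∫ ω, B * ((Cφ + Kc * (T - t) * |φ (Y ω T)|) * S ω ^ (r / 2 : ℝ)) ∂μ :=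
        integral_mono (hIX.sub hIY).abs (hIS.const_mul B) hpath
    _ = B * ∫ ω, (Cφ + Kc * (T - t) * |φ (Y ω T)|) * S ω ^ (r / 2 : ℝ) ∂μ :=
        integral_const_mul B _
    _ ≤ B * ((Cφ + Kc * (T - t) *
          (∫ ω, |φ (Y ω T)| ^ (1 - r / 2 : ℝ)⁻¹ ∂μ) ^ (1 - r / 2 : ℝ)) *
          (∫ ω, S ω ∂μ) ^ (r / 2 : ℝ)) := by
        gcongr
        exact integral_add_mul_abs_mul_rpow_le hφY hS hS₀ hθ₀ hθ₁ Cφ.coe_nonneg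
          (mul_nonneg Kc.coe_nonneg (sub_nonneg.2 htT))
    _ = _ := (mul_assoc _ _ _).symm

theorem feynmanKac_holder_on_compact_general {ι : Type*} [PseudoMetricSpace ι] {K : Set ι}
    {X : ι → Ω → ℝ → E} {C_K M₀ : ℝ}
    (hφ : HolderWith Cφ r φ) (hc : HolderWith Kc r c) (hr₀ : 0 < r) (hr₂ : r < 2)
    (hM : ∀ z, |c z| ≤ M) (htT : t ≤ T)
    (hX : ∀ x ∈ K, Measurable (Function.uncurry (X x)))
    (hXc : ∀ x ∈ K, ∀ ω, ContinuousOn (X x ω) (Set.Icc t T)) (hC_K : 0 ≤ C_K)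
    (hS : ∀ x ∈ K, ∀ y ∈ K, Integrable (fun ω ↦ supSqDist t T (X x ω) (X y ω)) μ)
    (hSle : ∀ x ∈ K, ∀ y ∈ K,
      ∫ ω, supSqDist t T (X x ω) (X y ω) ∂μ ≤ C_K * dist x y ^ 2)
    (hφX : ∀ y ∈ K, Integrable (fun ω ↦ |φ (X y ω T)| ^ (2 / (2 - r) : ℝ)) μ ∧
      ∫ ω, |φ (X y ω T)| ^ (2 / (2 - r) : ℝ) ∂μ ≤ M₀) :
    ∀ x ∈ K, ∀ y ∈ K,
      |(∫ ω, feynmanKacPayoff φ c t T (X x ω) ∂μ) - ∫ ω, feynmanKacPayoff φ c t T (X y ω) ∂μ| ≤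
        Real.exp ((T - t) * M) * C_K ^ (r / 2 : ℝ) *
          (Cφ + Kc * M₀ ^ (1 - r / 2 : ℝ) * (T - t)) * dist x y ^ (r : ℝ) := by
  intro x hx y hy
  have hr₂' : (r : ℝ) < 2 := mod_cast hr₂
  have hp : (2 / (2 - r) : ℝ) = (1 - r / 2 : ℝ)⁻¹ := by rw [one_sub_div two_ne_zero, inv_div]
  rw [hp] at hφX
  have hS₀ : 0 ≤ ∫ ω, supSqDist t T (X x ω) (X y ω) ∂μ := integral_nonneg fun _ ↦ supSqDist_nonneg
  have hSpow : (∫ ω, supSqDist t T (X x ω) (X y ω) ∂μ) ^ (r / 2 : ℝ) ≤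
      C_K ^ (r / 2 : ℝ) * dist x y ^ (r : ℝ) := by
    calc _ ≤ (C_K * dist x y ^ 2) ^ (r / 2 : ℝ) :=
          Real.rpow_le_rpow hS₀ (hSle x hx y hy) (by positivity)
      _ = C_K ^ (r / 2 : ℝ) * dist x y ^ (r : ℝ) := by
          rw [Real.mul_rpow hC_K (by positivity), Real.rpow_div_two_eq_sqrt _ (sq_nonneg _),
            Real.sqrt_sq dist_nonneg]
  have hφpow : (∫ ω, |φ (X y ω T)| ^ (1 - r / 2 : ℝ)⁻¹ ∂μ) ^ (1 - r / 2 : ℝ) ≤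
      M₀ ^ (1 - r / 2 : ℝ) :=
    Real.rpow_le_rpow (integral_nonneg fun _ ↦ by positivity) (hφX y hy).2 (by linarith)
  have hM₀ : 0 ≤ M₀ := (integral_nonneg fun _ ↦ by positivity).trans (hφX y hy).2
  have := sub_nonneg.2 htT
  calc _ ≤ _ := abs_integral_feynmanKacPayoff_sub_le hφ hc hr₀ hr₂ hM htT (hX x hx) (hXc x hx)
        (hX y hy) (hXc y hy) (hS x hx y hy) (hφX x hx).1 (hφX y hy).1
    _ ≤ Real.exp ((T - t) * M) * (Cφ + Kc * (T - t) * M₀ ^ (1 - r / 2 : ℝ)) *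
          (C_K ^ (r / 2 : ℝ) * dist x y ^ (r : ℝ)) := by gcongr
    _ = _ := by ring

end Expectations

/-- Hölder continuity on a compact `K` of `u(x) = E[φ(X_x(T)) exp(∫_t^T c(X_x(s))ds)]`
for `λ̃`-Hölder `φ` (constant `C_φ`), bounded `λ̃`-Hölder `c` (`‖c‖_∞ ≤ M_c`, constant `K_c`),
with the stability estimate `E[sup_{t≤s≤T}|X_x(s)−X_y(s)|²] ≤ C_K|x−y|²` on `K` and moment
bound `sup_{y∈K} E[|φ(X_y(T))|^{2/(2−λ̃)}] ≤ M_0`: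
`|u(x)−u(y)| ≤ e^{(T−t)M_c} C_K^{λ̃/2} (C_φ + K_c M_0^{1−λ̃/2}(T−t)) |x−y|^{λ̃}`. -/
theorem feynmanKac_holder_on_compact
    (n : ℕ) (hn : 1 ≤ n) (Ω : Type*) [MeasurableSpace Ω] (μ : Measure Ω)
    [IsProbabilityMeasure μ] (t T : ℝ) (ht : 0 ≤ t) (htT : t < T)
    (lam : ℝ) (hlam : 0 < lam) (hlam1 : lam ≤ 1)
    (X : EuclideanSpace ℝ (Fin n) → Ω → ℝ → EuclideanSpace ℝ (Fin n))
    (hXmeas : ∀ x, Measurable (Function.uncurry (X x)))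
    (hXcont : ∀ x ω, ContinuousOn (X x ω) (Set.Icc t T))
    (K : Set (EuclideanSpace ℝ (Fin n))) (hK : IsCompact K)
    (φ c : EuclideanSpace ℝ (Fin n) → ℝ)
    (Cφ Mc Kc : ℝ)
    (hφH : ∀ z w, |φ z - φ w| ≤ Cφ * ‖z - w‖ ^ lam)
    (hcb : ∀ z, |c z| ≤ Mc)
    (hcH : ∀ z w, |c z - c w| ≤ Kc * ‖z - w‖ ^ lam)
    (C_K : ℝ) (hCK : 0 < C_K)
    (hint : ∀ x ∈ K, ∀ y ∈ K,
      Integrable (fun ω => ⨆ s : Set.Icc t T, ‖X x ω (s : ℝ) - X y ω (s : ℝ)‖ ^ 2) μ)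
    (hstab : ∀ x ∈ K, ∀ y ∈ K,
      (∫ ω, (⨆ s : Set.Icc t T, ‖X x ω (s : ℝ) - X y ω (s : ℝ)‖ ^ 2) ∂μ)
        ≤ C_K * ‖x - y‖ ^ 2)
    (M₀ : ℝ) (hM₀ : 0 < M₀)
    (hmom : ∀ y ∈ K,
      Integrable (fun ω => |φ (X y ω T)| ^ ((2 : ℝ) / (2 - lam))) μ ∧
      (∫ ω, |φ (X y ω T)| ^ ((2 : ℝ) / (2 - lam)) ∂μ) ≤ M₀) :
    ∀ x ∈ K, ∀ y ∈ K,
      |(∫ ω, φ (X x ω T) * Real.exp (∫ s in t..T, c (X x ω s)) ∂μ)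
          - ∫ ω, φ (X y ω T) * Real.exp (∫ s in t..T, c (X y ω s)) ∂μ|
        ≤ Real.exp ((T - t) * Mc) * C_K ^ (lam / 2)
            * (Cφ + Kc * M₀ ^ (1 - lam / 2) * (T - t)) * ‖x - y‖ ^ lam := by
  have : Nonempty (Fin n) := ⟨⟨0, hn⟩⟩
  lift lam to ℝ≥0 using hlam.le
  obtain ⟨Cφ, rfl, hφ⟩ := exists_holderWith_of_abs_sub_le hφH
  obtain ⟨Kc, rfl, hc⟩ := exists_holderWith_of_abs_sub_le hcH
  simp only [← dist_eq_norm] at hint hstab ⊢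
  exact feynmanKac_holder_on_compact_general hφ hc (mod_cast hlam)
    (mod_cast hlam1.trans_lt one_lt_two) hcb htT.le (fun x _ ↦ hXmeas x) (fun x _ ↦ hXcont x)
    hCK.le hint hstab hmom
end
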